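/- arXiv:2507.21487 — 2 statements merged into one kernel-verified Lean document; each statement's English description precedes it below -/
import Mathlib

section
/- Let k ≥ 3 and h : ZMod k → ℕ with 2 ≤ h v ≤ 4 for every v. The Latvian game on the cycle C_k is winnable if and only if at least one of the following holds: (i) k = 3 and h v = 2 for some vertex v; (ii) (k = 4 or 3 divides k) and h v ≤ 3 for every v; (iii) there exist two distinct vertices v ≠ w with h v = 2 and h w = 2; (iv) there exists i with h (i−1) = 3, h i = 2, h (i+1) = 3; (v) there exists i with h i = 2, h (i+1) = 3, h (i+2) = 3, or there exists i with h i = 3, h (i+1) = 3, h (i+2) = 2. -/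
/-- A Czech hat game on the digraph with adjacency `D` (sage `v` sees sage `u`
iff `D v u`), guessness `g`, and hatness `h`, is winnable: there is a strategy
assigning to each sage `v` a set of `g v` guesses, depending only on the hats
she sees, such that for every coloring some sage guesses her own hat color. -/
def HatGame.Winnable {V : Type*} (D : V → V → Prop) (g h : V → ℕ) : Prop :=
  ∃ F : ∀ v : V, (∀ u : V, Fin (h u)) → Finset (Fin (h v)),
    (∀ (v : V) (c c' : ∀ u : V, Fin (h u)),
        (∀ u : V, D v u → c u = c' u) → F v c = F v c') ∧
    (∀ (v : V) (c : ∀ u : V, Fin (h u)), (F v c).card = g v) ∧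
    (∀ c : ∀ u : V, Fin (h u), ∃ v : V, c v ∈ F v c)

/-! If all sages guess wrong, then the colors form a closed walk of wrong guesses. Fixing the color
`a` of one sage and going around the cycle, the pairs of colors of her neighbors at the two ends of
such a path must all make her guess `a`, so these sets of pairs are disjoint for different `a`, and
the game is lost if they are too large in total. This settles all losing games except those with
three colors everywhere, in which the bounds are attained and force each strategy to be balanced:
the number of colors of the right neighbor for which a sage guesses `q`, given the color `p` of the
left one, depends only on a linear form in `p` and `q` modulo 3. When `3 ∤ k`, the colors can be
chosen so that all sages see the same value of this form, and no sage can guess right then. -/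

namespace HatGame

variable {k : ℕ} {α : Type*}

/-- Winnability of the Latvian game with hatness `h` on the cycle of length `k`. -/
def LatvianCycleWinnable (h : ZMod k → ℕ) : Prop :=
  Winnable (fun i j : ZMod k => j = i + 1 ∨ j = i - 1) (fun _ => 1) h

/-- The strategy in which sage `v`, seeing the colors `x` of `v - 1` and `z` of `v + 1`, guesses
`f v x z` wins on a cycle of length `k` if the color of `v` is restricted to `S v`. The colors come
from an arbitrary type, which allows strategies that calculate with them. -/
def CycleWins (S : ZMod k → Finset α) (f : ZMod k → α → α → α) : Prop :=
  ∀ c : ZMod k → α, (∀ v, c v ∈ S v) → ∃ v, c v = f v (c (v - 1)) (c (v + 1))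

theorem CycleWins.rotate {S : ZMod k → Finset α} {f : ZMod k → α → α → α} (hf : CycleWins S f)
    (s : ZMod k) : CycleWins (fun v => S (v + s)) fun v => f (v + s) := by
  intro c hc
  obtain ⟨v, hv⟩ := hf (fun v => c (v - s)) fun v => by simpa using hc (v - s)
  refine ⟨v - s, ?_⟩
  rw [show v - s - 1 = v - 1 - s by ring, show v - s + 1 = v + 1 - s by ring]
  simpa using hv

theorem CycleWins.reflect {S : ZMod k → Finset α} {f : ZMod k → α → α → α}
    (hf : CycleWins S f) : CycleWins (fun v => S (-v)) fun v x z => f (-v) z x := by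
  intro c hc
  obtain ⟨v, hv⟩ := hf (fun v => c (-v)) fun v => by simpa using hc (-v)
  refine ⟨-v, ?_⟩
  rw [show -v - 1 = -(v + 1) by ring, show -v + 1 = -(v - 1) by ring]
  simpa only [neg_neg] using hv

theorem CycleWins.latvianCycleWinnable {S : ZMod k → Finset α} {f : ZMod k → α → α → α}
    (hf : CycleWins S f) {h : ZMod k → ℕ} (hS : ∀ v, h v ≤ (S v).card) :
    LatvianCycleWinnable h := by
  let ι (v) : Fin (h v) ↪ S v :=
    (Function.Embedding.nonempty_of_card_le (by simpa using hS v)).some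
  let color (c : ∀ v, Fin (h v)) (v : ZMod k) : α := ι v (c v)
  let guess (v) (c : ∀ v, Fin (h v)) : Fin (h v) :=
    haveI : Nonempty (Fin (h v)) := ⟨c v⟩
    Function.invFun (fun i => (ι v i : α)) (f v (color c (v - 1)) (color c (v + 1)))
  refine ⟨fun v c => {guess v c}, fun v c c' hcc => ?_, fun v c => Finset.card_singleton _,
    fun c => ?_⟩
  · have : Nonempty (Fin (h v)) := ⟨c v⟩
    simp only [guess, color, hcc (v - 1) (Or.inr rfl), hcc (v + 1) (Or.inl rfl)]
  · obtain ⟨v, hv⟩ := hf (color c) fun v => (ι v (c v)).2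
    have : Nonempty (Fin (h v)) := ⟨c v⟩
    have hinj : Function.Injective fun i => (ι v i : α) :=
      Subtype.val_injective.comp (ι v).injective
    exact ⟨v, Finset.mem_singleton.2 <| by
      simp only [guess, ← hv]; exact (Function.leftInverse_invFun hinj (c v)).symm⟩

theorem LatvianCycleWinnable.exists_cycleWins {h : ZMod k → ℕ} (hh : LatvianCycleWinnable h)
    {S : ZMod k → Finset α} (hS : ∀ v, (S v).card ≤ h v) : ∃ f, CycleWins S f := by
  classical
  by_cases hne : ∀ v, (S v).Nonempty
  swap
  · obtain ⟨v, hv⟩ := not_forall.1 hne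
    exact ⟨fun _ x _ => x, fun c hc => (hv ⟨c v, hc v⟩).elim⟩
  obtain ⟨F, hF, hcard, hwin⟩ := hh
  choose guess hguess using fun v c => Finset.card_eq_one.1 (hcard v c)
  have hemb (v) : ∃ e : α → Fin (h v), Set.InjOn e (S v) := by
    obtain ⟨e⟩ : Nonempty (S v ↪ Fin (h v)) :=
      Function.Embedding.nonempty_of_card_le (by simpa using hS v)
    obtain ⟨x, hx⟩ := hne v
    refine ⟨fun y => if hy : y ∈ S v then e ⟨y, hy⟩ else e ⟨x, hx⟩, fun y hy z hz hyz => ?_⟩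
    rw [Finset.mem_coe] at hy hz
    simpa [hy, hz] using hyz
  choose e he using hemb
  let view (v : ZMod k) (x z : α) (u : ZMod k) : Fin (h u) := e u (if u = v - 1 then x else z)
  refine ⟨fun v x z => haveI : Nonempty α := ⟨x⟩
    Function.invFunOn (e v) (S v) (guess v (view v x z)), fun c hc => ?_⟩
  obtain ⟨v, hv⟩ := hwin fun u => e u (c u)
  have hview : F v (fun u => e u (c u)) = F v (view v (c (v - 1)) (c (v + 1))) := by
    refine hF v _ _ ?_
    rintro u (rfl | rfl)
    · by_cases huv : v + 1 = v - 1 <;> simp [view, huv]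
    · simp [view]
  rw [hview, hguess, Finset.mem_singleton] at hv
  have : Nonempty α := ⟨c v⟩
  refine ⟨v, ?_⟩
  simp only [← hv]
  exact (he v).leftInvOn_invFunOn (hc v) |>.symm

theorem LatvianCycleWinnable.rotate {h : ZMod k → ℕ} (hh : LatvianCycleWinnable h) (s : ZMod k) :
    LatvianCycleWinnable fun v => h (v + s) := by
  obtain ⟨f, hf⟩ := hh.exists_cycleWins (S := fun v => Finset.range (h v)) fun v => by simp
  exact (hf.rotate s).latvianCycleWinnable fun v => by simp

theorem LatvianCycleWinnable.reflect {h : ZMod k → ℕ} (hh : LatvianCycleWinnable h) :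
    LatvianCycleWinnable fun v => h (-v) := by
  obtain ⟨f, hf⟩ := hh.exists_cycleWins (S := fun v => Finset.range (h v)) fun v => by simp
  exact hf.reflect.latvianCycleWinnable fun v => by simp

theorem latvianCycleWinnable_rotate_iff {h : ZMod k → ℕ} (s : ZMod k) :
    LatvianCycleWinnable (fun v => h (v + s)) ↔ LatvianCycleWinnable h :=
  ⟨fun hh => by simpa using hh.rotate (-s), fun hh => hh.rotate s⟩

theorem latvianCycleWinnable_reflect_iff {h : ZMod k → ℕ} :
    LatvianCycleWinnable (fun v => h (-v)) ↔ LatvianCycleWinnable h :=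
  ⟨fun hh => by simpa using hh.reflect, fun hh => hh.reflect⟩

theorem natCast_ne_zero_of_lt {i : ℕ} (hi : 0 < i) (hik : i < k) : (i : ZMod k) ≠ 0 :=
  (ZMod.natCast_eq_zero_iff i k).not.2 (Nat.not_dvd_of_pos_of_lt hi hik)

theorem natCast_eq_neg_one {n : ℕ} (hn : n + 1 = k) : (n : ZMod k) = -1 := by
  subst hn
  exact eq_neg_of_add_eq_zero_left (by exact_mod_cast ZMod.natCast_self (n + 1))

theorem forall_of_forall_add_one [NeZero k] {p : ZMod k → Prop} {s : ZMod k} (hs : p s)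
    (hp : ∀ v, p v → p (v + 1)) (v : ZMod k) : p v := by
  have hnat (n : ℕ) : p (s + n) := by
    induction n with
    | zero => simpa using hs
    | succ n ih => simpa [add_assoc] using hp _ ih
  simpa using hnat (v - s).val

theorem of_forall_ne_add_one [NeZero k] {p : ZMod k → Prop} {s t : ZMod k} (hs : p s)
    (hp : ∀ v, v ≠ t → p v → p (v + 1)) : p t := by
  by_contra ht
  exact ht (forall_of_forall_add_one hs (fun v hv => hp v (fun hvt => ht (hvt ▸ hv)) hv) t)

theorem eq_of_forall_le_add_one [NeZero k] {β : Type*} [PartialOrder β] {g : ZMod k → β}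
    (hg : ∀ v, g v ≤ g (v + 1)) (v w : ZMod k) : g v = g w := by
  have hle (v w : ZMod k) : g v ≤ g w :=
    forall_of_forall_add_one (p := fun w => g v ≤ g w) le_rfl (fun u hu => hu.trans (hg u)) w
  exact (hle v w).antisymm (hle w v)

/-! ### Winning strategies -/

-- Given colors `a < 2` and `b`, `c` modulo 4, the three guesses cover the three cases
-- `2a + b + c = 0`, `2a + b + c = 1` and `2a + b + c ∈ {2, 3}`.
theorem latvianCycleWinnable_of_le_two {h : ZMod 3 → ℕ} (hh : ∀ v, h v ≤ 4) (h0 : h 0 ≤ 2) :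
    LatvianCycleWinnable h := by
  have hcover : ∀ b c : ZMod 4, ∀ a ∈ ({0, 1} : Finset (ZMod 4)),
      a = (if c + b ∈ ({0, 1} : Finset (ZMod 4)) then 1 else 0) ∨
        b = -(2 * a + c) ∨ c = 1 - (b + 2 * a) := by decide
  let S : Fin 3 → Finset (ZMod 4) := ![{0, 1}, Finset.univ, Finset.univ]
  let f : Fin 3 → ZMod 4 → ZMod 4 → ZMod 4 :=
    ![fun x z => if x + z ∈ ({0, 1} : Finset (ZMod 4)) then 1 else 0,
      fun x z => -(2 * x + z), fun x z => 1 - (x + 2 * z)]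
  have hf : CycleWins (k := 3) S f := by
    intro c hc
    rcases hcover (c 1) (c 2) (c 0) (hc 0) with h | h | h
    exacts [⟨0, h⟩, ⟨1, h⟩, ⟨2, h⟩]
  refine hf.latvianCycleWinnable fun v => ?_
  fin_cases v
  exacts [h0, hh 1, hh 2]

-- The wrong guesses are off by `±1`, so the sum of the squares of the four errors is `4 ≠ 0`. The
-- strategies are chosen such that it is also `3 (a² + b² + c² + d²) = 0`.
theorem latvianCycleWinnable_of_eq_four {h : ZMod 4 → ℕ} (hh : ∀ v, h v ≤ 3) :
    LatvianCycleWinnable h := by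
  let f : Fin 4 → ZMod 3 → ZMod 3 → ZMod 3 :=
    ![fun x z => x + z, fun x z => -(x + z), fun x z => x - z, fun x z => x - z]
  have hf : CycleWins (k := 4) (fun _ => Finset.univ) f := by
    intro c _
    by_contra! hne
    have hsq : ∀ x y : ZMod 3, x ≠ y → (x - y) ^ 2 = 1 := by decide
    have h0 : (c 0 - (c 3 + c 1)) ^ 2 = 1 := hsq _ _ (hne 0)
    have h1 : (c 1 - -(c 0 + c 2)) ^ 2 = 1 := hsq _ _ (hne 1)
    have h2 : (c 2 - (c 1 - c 3)) ^ 2 = 1 := hsq _ _ (hne 2)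
    have h3 : (c 3 - (c 2 - c 0)) ^ 2 = 1 := hsq _ _ (hne 3)
    have three : (3 : ZMod 3) = 0 := by decide
    have four : (4 : ZMod 3) = 0 := by
      linear_combination (c 0 ^ 2 + c 1 ^ 2 + c 2 ^ 2 + c 3 ^ 2) * three - h0 - h1 - h2 - h3
    exact absurd four (by decide)
  exact hf.latvianCycleWinnable hh

-- If all sages guess wrong, then the differences of consecutive colors, twisted by `τ`, are
-- constant, so their sum is `k * d 0 = 0`; but the differences of the colors telescope and `τ` has
-- sum `1`.
theorem latvianCycleWinnable_of_three_dvd [NeZero k] (hk : 3 ∣ k) {h : ZMod k → ℕ}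
    (hh : ∀ v, h v ≤ 3) : LatvianCycleWinnable h := by
  let τ : ZMod k → ZMod 3 := Pi.single 0 1
  let φ : ZMod 3 → ZMod 3 → ZMod 3 := fun x z => if z = x then x - 1 else x
  have hφ : ∀ x y z : ZMod 3, y ≠ φ x z → (y - x - 1).val ≤ (z - y - 1).val := by decide
  suffices hf : CycleWins (fun _ => Finset.univ) fun v x z => φ (x - τ (v - 1)) (z + τ v) from
    hf.latvianCycleWinnable hh
  intro c _
  by_contra! hne
  let d (v : ZMod k) : ZMod 3 := c (v + 1) - c v + τ v
  have hmono (v : ZMod k) : (d v - 1).val ≤ (d (v + 1) - 1).val := by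
    have := hφ _ _ _ (hne (v + 1))
    simp only [add_sub_cancel_right] at this
    convert this using 2 <;> simp only [d] <;> ring
  have hconst (v : ZMod k) : d v = d 0 := by
    simpa using ZMod.val_injective 3 (eq_of_forall_le_add_one hmono v 0)
  have hshift : ∑ v, c (v + 1) = ∑ v, c v := Equiv.sum_comp (Equiv.addRight (1 : ZMod k)) c
  have hsum : ∑ v, d v = 1 := by
    simp [d, Finset.sum_add_distrib, Finset.sum_sub_distrib, hshift, τ]
  have hk0 : ((k : ℕ) : ZMod 3) = 0 := (ZMod.natCast_eq_zero_iff k 3).2 hk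
  have hzero : ∑ v, d v = 0 := by simp [hconst, ZMod.card, hk0]
  exact zero_ne_one (hzero.symm.trans hsum)

/-- The guess of a sage who sees the colors `x` and `z`, each of them a pair consisting of a left
and a right bit: her left bit differs from the right bit of `x`, and her right bit agrees with the
left bit of `z`. If she is wrong, then a mismatch of bits to her left causes one to her right. -/
def relay (x z : Bool × Bool) : Bool × Bool := (!x.2, z.1)

theorem ne_of_ne_relay {x y z : Bool × Bool} (hy : y ≠ relay x z) (hxy : x.2 ≠ y.1) :
    y.2 ≠ z.1 := by
  revert x y z; decide

-- A mismatch of adjacent bits arises next to `s` and is relayed around the cycle to `t`, whose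
-- guess rules it out.
theorem latvianCycleWinnable_of_le_two_of_le_two [NeZero k] {h : ZMod k → ℕ} (hh : ∀ v, h v ≤ 4)
    {s t : ZMod k} (hst : s ≠ t) (hs : h s ≤ 2) (ht : h t ≤ 2) : LatvianCycleWinnable h := by
  let S (v : ZMod k) : Finset (Bool × Bool) :=
    if v = s then Finset.univ.filter fun x => x.1 = false
    else if v = t then Finset.univ.filter fun x => x.2 = false else Finset.univ
  let f (v : ZMod k) (x z : Bool × Bool) : Bool × Bool :=
    if v = s then (false, z.1) else if v = t then (!x.2, false) else relay x z
  have hf : CycleWins S f := by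
    intro c hc
    by_contra! hne
    have hcs : (c s).1 = false := by simpa [S] using hc s
    have hct : (c t).2 = false := by simpa [S, hst.symm] using hc t
    have hs' : (c s).2 ≠ (c (s + 1)).1 := by
      simpa [f, Prod.ext_iff, hcs] using hne s
    have ht' : (c t).1 = (c (t - 1)).2 := by
      simpa [f, Prod.ext_iff, hct, hst.symm] using hne t
    have hmis : (c (t - 1)).2 ≠ (c (t - 1 + 1)).1 := by
      refine of_forall_ne_add_one (p := fun v => (c v).2 ≠ (c (v + 1)).1) hs' fun v hvt hv => ?_
      by_cases hvs : v + 1 = s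
      · rwa [hvs]
      · have hvt' : v + 1 ≠ t := fun h => hvt (eq_sub_of_add_eq h)
        exact ne_of_ne_relay (by simpa [f, hvs, hvt'] using hne (v + 1)) hv
    exact hmis (by simpa using ht'.symm)
  refine hf.latvianCycleWinnable fun v => ?_
  by_cases hvs : v = s
  · simp only [S, hvs, if_true]; exact hs
  by_cases hvt : v = t
  · simp only [S, hvt, hst.symm, if_false, if_true]; exact ht
  · simpa [S, hvs, hvt] using hh v

theorem relay_from_one_to_neg_one [Fact (2 < k)] {c : ZMod k → Bool × Bool}
    (hne : ∀ v, v ≠ -1 → v ≠ 0 → v ≠ 1 → c v ≠ relay (c (v - 1)) (c (v + 1)))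
    (h1 : (c 1).2 ≠ (c (1 + 1)).1) : (c (-1 - 1)).2 ≠ (c (-1)).1 := by
  have : Fact (1 < k) := ⟨one_lt_two.trans Fact.out⟩
  have : NeZero k := ⟨(pos_of_gt (Fact.out : 2 < k)).ne'⟩
  have hmis : (-1 - 1 : ZMod k) = -1 ∨ (-1 - 1 : ZMod k) = 0 ∨
      (c (-1 - 1)).2 ≠ (c (-1 - 1 + 1)).1 := by
    refine of_forall_ne_add_one (s := 1)
      (p := fun v => v = -1 ∨ v = 0 ∨ (c v).2 ≠ (c (v + 1)).1) (.inr (.inr h1)) ?_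
    intro v hvt hv
    by_cases hv0 : v + 1 = 0
    · exact .inr (.inl hv0)
    by_cases hv1 : v = 0
    · exact .inr (.inr (by simpa [hv1] using h1))
    have hmis : (c v).2 ≠ (c (v + 1)).1 :=
      (hv.resolve_left fun h => hv0 (by simp [h])).resolve_left hv1
    have hnext := hne (v + 1) (fun h => hvt (eq_sub_of_add_eq h)) hv0 (by simpa using hv1)
    rw [add_sub_cancel_right] at hnext
    exact .inr (.inr (ne_of_ne_relay hnext hmis))
  rcases hmis with h | h | h
  · exact absurd h (by simp)
  · exact absurd (by linear_combination h : (-1 : ZMod k) = 1) ZMod.neg_one_ne_one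
  · simpa using h

-- If the three special sages guess wrong, then there is a mismatch of bits to their right, which
-- the other sages relay around the cycle, but none to their left.
theorem latvianCycleWinnable_of_block (hk : 3 ≤ k) {h : ZMod k → ℕ} (hh : ∀ v, h v ≤ 4)
    {i : ZMod k} {A B C : Finset (Bool × Bool)} (hA : h (i - 1) ≤ A.card) (hB : h i ≤ B.card)
    (hC : h (i + 1) ≤ C.card) {f₁ f₂ f₃ : Bool × Bool → Bool × Bool → Bool × Bool}
    (hf : ∀ w, ∀ x ∈ A, ∀ y ∈ B, ∀ z ∈ C, ∀ u, x = f₁ w y ∨ y = f₂ x z ∨ z = f₃ y u ∨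
      w.2 = x.1 ∧ z.2 ≠ u.1) : LatvianCycleWinnable h := by
  wlog hi : i = 0 generalizing h i
  · rw [← latvianCycleWinnable_rotate_iff i]
    refine this (i := 0) (fun v => hh _) ?_ ?_ ?_ rfl
    · rwa [zero_sub, neg_add_eq_sub]
    · rwa [zero_add]
    · rwa [zero_add, add_comm]
  rw [hi, zero_sub] at hA
  rw [hi] at hB
  rw [hi, zero_add] at hC
  have : Fact (2 < k) := ⟨hk⟩
  have : Fact (1 < k) := ⟨by omega⟩
  have h01 : (0 : ZMod k) ≠ -1 := by simp
  have h11 : (1 : ZMod k) ≠ -1 := ZMod.neg_one_ne_one.symm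
  let S (v : ZMod k) : Finset (Bool × Bool) :=
    if v = -1 then A else if v = 0 then B else if v = 1 then C else Finset.univ
  let f (v : ZMod k) : Bool × Bool → Bool × Bool → Bool × Bool :=
    if v = -1 then f₁ else if v = 0 then f₂ else if v = 1 then f₃ else relay
  have hwin : CycleWins S f := by
    intro c hc
    by_contra! hne
    obtain ⟨hfirst, hlast⟩ : (c (-1 - 1)).2 = (c (-1)).1 ∧ (c 1).2 ≠ (c (1 + 1)).1 := by
      have hcA := hc (-1)
      have hcB := hc 0
      have hcC := hc 1
      have h₁ := hne (-1)
      have h₂ := hne 0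
      have h₃ := hne 1
      simp only [S, f, one_ne_zero, h01, h11, if_true, if_false, neg_add_cancel, zero_sub,
        zero_add, sub_self] at hcA hcB hcC h₁ h₂ h₃
      simpa only [h₁, h₂, h₃, false_or] using hf (c (-1 - 1)) _ hcA _ hcB _ hcC (c (1 + 1))
    refine relay_from_one_to_neg_one (fun v h₁ h₂ h₃ => ?_) hlast hfirst
    simpa [f, h₁, h₂, h₃] using hne v
  refine hwin.latvianCycleWinnable fun v => ?_
  simp only [S]
  split_ifs with h₁ h₂ h₃
  exacts [h₁ ▸ hA, h₂ ▸ hB, h₃ ▸ hC, hh v]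

theorem latvianCycleWinnable_of_three_two_three (hk : 3 ≤ k) {h : ZMod k → ℕ} (hh : ∀ v, h v ≤ 4)
    {i : ZMod k} (h₁ : h (i - 1) ≤ 3) (h₂ : h i ≤ 2) (h₃ : h (i + 1) ≤ 3) :
    LatvianCycleWinnable h :=
  latvianCycleWinnable_of_block hk hh (A := Finset.univ.erase (true, true))
    (B := {(false, false), (false, true)}) (C := Finset.univ.erase (true, true)) h₁ h₂ h₃
    (f₁ := fun w y => (!w.2 && !y.2, w.2 && !y.2))
    (f₂ := fun x z => (false, (x.1 || x.2) && !z.1))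
    (f₃ := fun y u => (y.2, !y.2 && u.1)) (by decide)

set_option synthInstance.maxSize 256 in
theorem latvianCycleWinnable_of_three_three_two (hk : 3 ≤ k) {h : ZMod k → ℕ} (hh : ∀ v, h v ≤ 4)
    {i : ZMod k} (h₁ : h i ≤ 3) (h₂ : h (i + 1) ≤ 3) (h₃ : h (i + 2) ≤ 2) :
    LatvianCycleWinnable h :=
  latvianCycleWinnable_of_block hk hh (i := i + 1) (A := Finset.univ.erase (true, true))
    (B := Finset.univ.erase (true, true)) (C := {(false, false), (false, true)})
    (by rwa [add_sub_cancel_right]) h₂ (by rwa [add_assoc, one_add_one_eq_two])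
    (f₁ := fun w y => (y.1 && !w.2, !y.1)) (f₂ := fun x z => (x.2, !x.2 && !z.2))
    (f₃ := fun y u => (false, y.2 || y.1 && u.1)) (by decide)

theorem latvianCycleWinnable_of_two_three_three (hk : 3 ≤ k) {h : ZMod k → ℕ} (hh : ∀ v, h v ≤ 4)
    {i : ZMod k} (h₁ : h i ≤ 2) (h₂ : h (i + 1) ≤ 3) (h₃ : h (i + 2) ≤ 3) :
    LatvianCycleWinnable h := by
  rw [← latvianCycleWinnable_reflect_iff]
  refine latvianCycleWinnable_of_three_three_two hk (fun v => hh _) (i := -(i + 2)) ?_ ?_ ?_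
  · rwa [neg_neg]
  · rwa [show -(-(i + 2) + 1) = i + 1 by ring]
  · rwa [show -(-(i + 2) + 2) = i by ring]

/-! ### Paths of wrong guesses -/

section Paths

/-- The sages `1, …, n` on a path have colors that make each of them guess wrong, where `S i` and
`F i` are the color set and the strategy of sage `i`, the end vertices `0` and `n + 1` have colors
`a` and `z`, and the colors of sages `1` and `n` are `b` and `y`. -/
def WrongPath (S : ℕ → Finset α) (F : ℕ → α → α → α) (n : ℕ) (a b y z : α) : Prop :=
  ∃ u : ℕ → α, u 0 = a ∧ u 1 = b ∧ u n = y ∧ u (n + 1) = z ∧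
    ∀ i < n, u (i + 1) ∈ S (i + 1) ∧ u (i + 1) ≠ F (i + 1) (u i) (u (i + 2))

variable {S : ℕ → Finset α} {F : ℕ → α → α → α} {n : ℕ} {a b y z : α}

theorem wrongPath_zero : WrongPath S F 0 a b y z ↔ a = y ∧ b = z := by
  constructor
  · rintro ⟨u, rfl, rfl, rfl, rfl, -⟩
    exact ⟨rfl, rfl⟩
  · rintro ⟨rfl, rfl⟩
    exact ⟨fun i => if i = 0 then a else b, by simp⟩

theorem wrongPath_succ : WrongPath S F (n + 1) a b y z ↔
    ∃ x, WrongPath S F n a b x y ∧ y ∈ S (n + 1) ∧ y ≠ F (n + 1) x z := by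
  constructor
  · rintro ⟨u, rfl, rfl, rfl, rfl, hu⟩
    exact ⟨u n, ⟨u, rfl, rfl, rfl, rfl, fun i hi => hu i (hi.trans n.lt_succ_self)⟩,
      hu n n.lt_succ_self⟩
  · rintro ⟨_, ⟨u, rfl, rfl, rfl, rfl, hu⟩, hy⟩
    have hupdate (i) (hi : i ≤ n + 1) : Function.update u (n + 2) z i = u i :=
      Function.update_of_ne (by omega) ..
    refine ⟨Function.update u (n + 2) z, hupdate _ (by omega), hupdate _ (by omega),
      hupdate _ (by omega), Function.update_self .., fun i hi => ?_⟩
    rw [hupdate _ (by omega), hupdate _ (by omega)]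
    obtain rfl | hi := Nat.lt_succ_iff_lt_or_eq.1 hi |>.symm
    · simpa using hy
    · rw [hupdate _ (by omega)]
      exact hu i hi

namespace WrongPath

theorem last_mem (hp : WrongPath S F (n + 1) a b y z) : y ∈ S (n + 1) :=
  (wrongPath_succ.1 hp).choose_spec.2.1

theorem first_mem (hp : WrongPath S F (n + 1) a b y z) : b ∈ S 1 := by
  obtain ⟨u, -, rfl, -, -, hu⟩ := hp
  exact (hu 0 n.succ_pos).1

theorem reverse (hp : WrongPath S F n a b y z) :
    WrongPath (fun i => S (n + 1 - i)) (fun i x z => F (n + 1 - i) z x) n z y b a := by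
  obtain ⟨u, rfl, rfl, rfl, rfl, hu⟩ := hp
  refine ⟨fun i => u (n + 1 - i), rfl, rfl, by simp, by simp, fun i hi => ?_⟩
  have := hu (n - 1 - i) (by omega)
  rwa [show n - 1 - i + 1 = n + 1 - (i + 1) by omega, show n - 1 - i = n + 1 - (i + 2) by omega,
    show n + 1 - (i + 2) + 2 = n + 1 - i by omega] at this

end WrongPath

theorem wrongPath_reverse : WrongPath (fun i => S (n + 1 - i)) (fun i x z => F (n + 1 - i) z x) n
    z y b a ↔ WrongPath S F n a b y z := by
  refine ⟨fun hp => ?_, .reverse⟩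
  obtain ⟨u, rfl, rfl, rfl, rfl, hu⟩ := hp.reverse
  refine ⟨u, rfl, rfl, rfl, rfl, fun i hi => ?_⟩
  have := hu i hi
  simp only at this
  rwa [show n + 1 - (n + 1 - (i + 1)) = i + 1 by omega] at this

theorem exists_coloring_of_apply_eq (u : ℕ → α) (hn : n + 1 = k) (hu : u (n + 1) = u 0)
    (v : ZMod k) : ∃ c : ZMod k → α, ∀ i ≤ n + 1, c (v + i) = u i := by
  have : NeZero k := ⟨by omega⟩
  refine ⟨fun w => u (w - v).val, fun i hi => ?_⟩
  simp only [add_sub_cancel_left]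
  rcases hi.eq_or_lt with h | h
  · rw [h, hn, ZMod.natCast_self, ZMod.val_zero, ← hn, hu]
  · rw [ZMod.val_cast_of_lt (by omega)]

theorem CycleWins.eq_of_wrongPath {S : ZMod k → Finset α} {f : ZMod k → α → α → α}
    (hf : CycleWins S f) (hn : n + 1 = k) {v : ZMod k} (ha : a ∈ S v)
    (hp : WrongPath (fun i => S (v + i)) (fun i => f (v + i)) n a b y a) : a = f v y b := by
  obtain ⟨u, rfl, rfl, rfl, hclose, hu⟩ := hp
  obtain ⟨c, hc⟩ := exists_coloring_of_apply_eq u hn hclose v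
  have : NeZero k := ⟨by omega⟩
  have hmem (w : ZMod k) : ∃ i ≤ n, w = v + i :=
    ⟨(w - v).val, by have := ZMod.val_lt (w - v); omega, by simp⟩
  obtain ⟨w, hw⟩ := hf c fun w => by
    obtain ⟨i, hi, rfl⟩ := hmem w
    rw [hc i (by omega)]
    cases i with
    | zero => simpa using ha
    | succ i => exact (hu i hi).1
  obtain ⟨i, hi, rfl⟩ := hmem w
  cases i with
  | zero =>
    have hpred : v - 1 = v + n := by rw [natCast_eq_neg_one hn, sub_eq_add_neg]
    have h1 := hc 1 (by omega)
    have h0 := hc 0 (by omega)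
    simp only [Nat.cast_zero, Nat.cast_one, add_zero] at hw h0 h1
    rwa [h0, h1, hpred, hc n (by omega)] at hw
  | succ i =>
    refine absurd ?_ (hu i hi).2
    rw [hc _ (by omega), show v + (i + 1 : ℕ) - 1 = v + i by push_cast; ring,
      show v + (i + 1 : ℕ) + 1 = v + (i + 2 : ℕ) by push_cast; ring, hc _ (by omega),
      hc _ (by omega)] at hw
    exact hw

open Classical in
/-- The pairs of colors of the first and the last sage on a path of `n` wrong guesses with colors
`a` and `z` of the end vertices. -/
noncomputable def ends (S : ℕ → Finset α) (F : ℕ → α → α → α) (n : ℕ) (a z : α) : Finset (α × α) :=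
  {p ∈ S 1 ×ˢ S n | WrongPath S F n a p.1 p.2 z}

theorem mem_ends (hn : n ≠ 0) {p : α × α} :
    p ∈ ends S F n a z ↔ WrongPath S F n a p.1 p.2 z := by
  obtain ⟨n, rfl⟩ := Nat.exists_eq_succ_of_ne_zero hn
  simp only [ends, Finset.mem_filter, Finset.mem_product, and_iff_right_iff_imp]
  exact fun hp => ⟨hp.first_mem, hp.last_mem⟩

theorem CycleWins.sum_card_ends_le {S : ZMod k → Finset α} {f : ZMod k → α → α → α}
    (hf : CycleWins S f) (hn : n + 1 = k) (v : ZMod k) :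
    ∑ a ∈ S v, (ends (fun i => S (v + i)) (fun i => f (v + i)) n a a).card ≤
      (S (v + 1)).card * (S (v - 1)).card := by
  classical
  have hlast : v + n = v - 1 := by rw [natCast_eq_neg_one hn, sub_eq_add_neg]
  have hdisj : Set.PairwiseDisjoint (S v : Set α)
      fun a => ends (fun i => S (v + i)) (fun i => f (v + i)) n a a := by
    refine fun a ha a' ha' hne => Finset.disjoint_left.2 fun p hp hp' => hne ?_
    have h := hf.eq_of_wrongPath hn ha (Finset.mem_filter.1 hp).2
    have h' := hf.eq_of_wrongPath hn ha' (Finset.mem_filter.1 hp').2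
    exact h.trans h'.symm
  rw [← Finset.card_biUnion hdisj, ← Finset.card_product]
  refine Finset.card_le_card (Finset.biUnion_subset.2 fun a _ => ?_)
  refine (Finset.filter_subset _ _).trans_eq ?_
  simp [hlast]

/-- Any two of the sets `{y | R w y}` meet. For the relation `R` between the color `w` of the sage
after a path and the possible colors `y` of its last sage, this allows the path to be extended by
all but one color. -/
def StronglyMeeting (R : α → α → Prop) : Prop := ∀ w₁ w₂, ∃ y, R w₁ y ∧ R w₂ y

/-- Among any three of the sets `{y | R w y}`, two meet. This weakening of `StronglyMeeting` allows
the path to be extended by all but two colors. -/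
def WeaklyMeeting (R : α → α → Prop) : Prop :=
  ∀ w₁ w₂ w₃, w₁ ≠ w₂ → w₁ ≠ w₃ → w₂ ≠ w₃ →
    ∃ y, R w₁ y ∧ R w₂ y ∨ R w₁ y ∧ R w₃ y ∨ R w₂ y ∧ R w₃ y

open Classical in
theorem StronglyMeeting.card_filter_le {R : α → α → Prop} (hR : StronglyMeeting R) (s : Finset α)
    (φ : α → α) : s.card ≤ (s.filter fun w => ∃ y, R w y ∧ w ≠ φ y).card + 1 := by
  rw [← Finset.card_filter_add_card_filter_not (s := s) fun w => ∃ y, R w y ∧ w ≠ φ y]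
  gcongr
  refine Finset.card_le_one.2 fun w hw w' hw' => ?_
  simp only [Finset.mem_filter, not_exists, not_and, not_not] at hw hw'
  obtain ⟨y, hy, hy'⟩ := hR w w'
  exact (hw.2 y hy).trans (hw'.2 y hy').symm

open Classical in
theorem WeaklyMeeting.card_filter_le {R : α → α → Prop} (hR : WeaklyMeeting R) (s : Finset α)
    (φ : α → α) : s.card ≤ (s.filter fun w => ∃ y, R w y ∧ w ≠ φ y).card + 2 := by
  rw [← Finset.card_filter_add_card_filter_not (s := s) fun w => ∃ y, R w y ∧ w ≠ φ y]
  gcongr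
  by_contra! hlt
  obtain ⟨w₁, w₂, w₃, h₁, h₂, h₃, h₁₂, h₁₃, h₂₃⟩ := Finset.two_lt_card_iff.1 hlt
  simp only [Finset.mem_filter] at h₁ h₂ h₃
  obtain ⟨y, ⟨hy, hy'⟩ | ⟨hy, hy'⟩ | ⟨hy, hy'⟩⟩ := hR w₁ w₂ w₃ h₁₂ h₁₃ h₂₃
  · exact h₁₂ ((h₁.2 y hy).trans (h₂.2 y hy').symm)
  · exact h₁₃ ((h₁.2 y hy).trans (h₃.2 y hy').symm)
  · exact h₂₃ ((h₂.2 y hy).trans (h₃.2 y hy').symm)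

theorem StronglyMeeting.extend {R : α → α → Prop} (hR : StronglyMeeting R) {s : Finset α}
    (hs : 2 < s.card) (φ : α → α → α) :
    StronglyMeeting fun z w => ∃ y, R w y ∧ w ∈ s ∧ w ≠ φ y z := by
  classical
  intro z z'
  let A (z : α) : Finset α := s.filter fun w => ∃ y, R w y ∧ w ≠ φ y z
  have hA (z : α) : s.card ≤ (A z).card + 1 := hR.card_filter_le s (φ · z)
  have hinter : ((A z) ∩ (A z')).Nonempty := by
    have hunion : (A z ∪ A z').card ≤ s.card :=
      Finset.card_le_card (Finset.union_subset (Finset.filter_subset ..) (Finset.filter_subset ..))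
    have := Finset.card_union_add_card_inter (A z) (A z')
    have := hA z
    have := hA z'
    exact Finset.card_pos.1 (by omega)
  obtain ⟨w, hw⟩ := hinter
  simp only [A, Finset.mem_inter, Finset.mem_filter] at hw
  obtain ⟨⟨hs, y, hy, hne⟩, -, y', hy', hne'⟩ := hw
  exact ⟨w, ⟨y, hy, hs, hne⟩, y', hy', hs, hne'⟩

theorem weaklyMeeting_of_forall_or {R : α → α → Prop} {w w' : α} (hR : ∀ z, R z w ∨ R z w') :
    WeaklyMeeting R := by
  intro z₁ z₂ z₃ _ _ _
  rcases hR z₁ with h₁ | h₁ <;> rcases hR z₂ with h₂ | h₂ <;> rcases hR z₃ with h₃ | h₃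
  all_goals first
    | exact ⟨_, .inl ⟨h₁, h₂⟩⟩
    | exact ⟨_, .inr (.inl ⟨h₁, h₃⟩)⟩
    | exact ⟨_, .inr (.inr ⟨h₂, h₃⟩)⟩

-- Two colors `w ≠ w'` of `s` are compatible with a common `y`, so every `z` allows one of them;
-- among any three `z`, two allow the same one.
theorem WeaklyMeeting.extend {R : α → α → Prop} (hR : WeaklyMeeting R) {s : Finset α}
    (hs : 2 < s.card) (φ : α → α → α) :
    WeaklyMeeting fun z w => ∃ y, R w y ∧ w ∈ s ∧ w ≠ φ y z := by
  obtain ⟨w, hw, w', hw', hne, y, hy, hy'⟩ : ∃ w ∈ s, ∃ w' ∈ s, w ≠ w' ∧ ∃ y, R w y ∧ R w' y := by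
    obtain ⟨w₁, w₂, w₃, h₁, h₂, h₃, h₁₂, h₁₃, h₂₃⟩ := Finset.two_lt_card_iff.1 hs
    obtain ⟨y, ⟨hy, hy'⟩ | ⟨hy, hy'⟩ | ⟨hy, hy'⟩⟩ := hR w₁ w₂ w₃ h₁₂ h₁₃ h₂₃
    exacts [⟨w₁, h₁, w₂, h₂, h₁₂, y, hy, hy'⟩, ⟨w₁, h₁, w₃, h₃, h₁₃, y, hy, hy'⟩,
      ⟨w₂, h₂, w₃, h₃, h₂₃, y, hy, hy'⟩]
  have hor (z : α) : (∃ y, R w y ∧ w ∈ s ∧ w ≠ φ y z) ∨ ∃ y, R w' y ∧ w' ∈ s ∧ w' ≠ φ y z := by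
    by_cases hz : w = φ y z
    · exact .inr ⟨y, hy', hw', fun h => hne (hz.trans h.symm)⟩
    · exact .inl ⟨y, hy, hw, hz⟩
  exact weaklyMeeting_of_forall_or hor

theorem stronglyMeeting_of_two_lt_card {s : Finset α} (hs : 2 < s.card) (φ : α → α) :
    StronglyMeeting fun z w => w ∈ s ∧ w ≠ φ z := by
  obtain ⟨x, -⟩ := Finset.card_pos.1 (two_pos.trans hs)
  have : Nonempty α := ⟨x⟩
  have hR : StronglyMeeting fun _ _ : α => True := fun _ _ => ⟨x, trivial, trivial⟩
  simpa using hR.extend hs fun _ => φ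

theorem weaklyMeeting_of_one_lt_card {s : Finset α} (hs : 1 < s.card) (φ : α → α) :
    WeaklyMeeting fun z w => w ∈ s ∧ w ≠ φ z := by
  obtain ⟨w, hw, w', hw', hne⟩ := Finset.one_lt_card.1 hs
  refine weaklyMeeting_of_forall_or (w := w) (w' := w') fun z => ?_
  by_cases hz : w = φ z
  · exact .inr ⟨hw', fun h => hne (hz.trans h.symm)⟩
  · exact .inl ⟨hw, hz⟩

theorem stronglyMeeting_wrongPath (hS : ∀ i < n, 2 < (S (i + 1)).card) (a : α) :
    StronglyMeeting fun w y => ∃ b, WrongPath S F n a b y w := by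
  induction n with
  | zero =>
    exact fun w w' => ⟨a, ⟨w, wrongPath_zero.2 ⟨rfl, rfl⟩⟩, w', wrongPath_zero.2 ⟨rfl, rfl⟩⟩
  | succ n ih =>
    have := (ih fun i hi => hS i (hi.trans n.lt_succ_self)).extend (hS n n.lt_succ_self) (F (n + 1))
    convert this using 3
    simp only [wrongPath_succ, ← exists_and_right]
    exact exists_comm

open Classical in
theorem two_le_card_image_snd_ends (hS : ∀ i < n + 1, 2 < (S (i + 1)).card) (a z : α) :
    2 ≤ ((ends S F (n + 1) a z).image Prod.snd).card := by
  have hle := (stronglyMeeting_wrongPath (F := F) (fun i hi => hS i (hi.trans n.lt_succ_self))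
    a).card_filter_le (S (n + 1)) (F (n + 1) · z)
  have hlast := hS n n.lt_succ_self
  refine le_trans (by omega) (Finset.card_le_card (s := (S (n + 1)).filter
    fun w => ∃ y, (∃ b, WrongPath S F n a b y w) ∧ w ≠ F (n + 1) y z) fun w hw => ?_)
  obtain ⟨hwS, y, ⟨b, hb⟩, hne⟩ := Finset.mem_filter.1 hw
  exact Finset.mem_image.2 ⟨(b, w),
    (mem_ends n.succ_ne_zero).2 (wrongPath_succ.2 ⟨y, hb, hwS, hne⟩), rfl⟩

open Classical in
theorem two_le_card_image_fst_ends (hS : ∀ i < n + 1, 2 < (S (i + 1)).card) (a z : α) :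
    2 ≤ ((ends S F (n + 1) a z).image Prod.fst).card := by
  have hreverse : (ends S F (n + 1) a z).image Prod.fst =
      (ends (fun i => S (n + 1 + 1 - i)) (fun i x z => F (n + 1 + 1 - i) z x) (n + 1) z a).image
        Prod.snd := by
    ext b
    simp [mem_ends, wrongPath_reverse]
  rw [hreverse]
  refine two_le_card_image_snd_ends (fun i hi => ?_) z a
  have := hS (n - i) (by omega)
  rwa [show n - i + 1 = n + 1 + 1 - (i + 1) by omega] at this

theorem two_le_card_add_card_of_cover {β γ : Type*} [DecidableEq β] [DecidableEq γ]
    {Q : Finset (β × γ)} (hfst : 2 ≤ (Q.image Prod.fst).card) (hsnd : 2 ≤ (Q.image Prod.snd).card)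
    {B : Finset β} {Y : Finset γ} (hQ : ∀ q ∈ Q, q.1 ∈ B ∨ q.2 ∈ Y) : 2 ≤ B.card + Y.card := by
  by_contra! hlt
  obtain hB | hY : B = ∅ ∨ Y = ∅ := by
    simp only [← Finset.card_eq_zero]
    omega
  · have : (Q.image Prod.snd).card ≤ Y.card :=
      Finset.card_le_card (Finset.image_subset_iff.2 fun q hq => by simpa [hB] using hQ q hq)
    omega
  · have : (Q.image Prod.fst).card ≤ B.card :=
      Finset.card_le_card (Finset.image_subset_iff.2 fun q hq => by simpa [hY] using hQ q hq)
    omega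

open Classical in
theorem two_le_card_add_card_of_ends (hS : ∀ i < n + 1, 2 < (S (i + 1)).card) {a z : α}
    {B Y : Finset α} (hcover : ∀ p ∈ ends S F (n + 1) a z, p.1 ∈ B ∨ p.2 ∈ Y) :
    2 ≤ B.card + Y.card :=
  two_le_card_add_card_of_cover (two_le_card_image_fst_ends hS a z)
    (two_le_card_image_snd_ends hS a z) hcover

theorem two_mul_card_le_card_ends_add_card (hS : ∀ i < n + 1, 2 < (S (i + 1)).card) (a z : α) :
    2 * (S (n + 2)).card ≤ (ends S F (n + 2) a z).card + (S (n + 1)).card := by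
  classical
  -- A color `w` of the last sage occurs in `ends` except with the colors `x` of her predecessor for
  -- which `w` is her guess.
  let B (w : α) : Finset α := ((ends S F (n + 2) a z).filter (·.2 = w)).image Prod.fst
  let Y (w : α) : Finset α := (S (n + 1)).filter (F (n + 2) · z = w)
  have hcover (w) (hw : w ∈ S (n + 2)) : 2 ≤ (B w).card + (Y w).card := by
    refine two_le_card_add_card_of_ends hS (a := a) (z := w) (F := F) fun p hp => ?_
    rw [mem_ends n.succ_ne_zero] at hp
    by_cases hpw : F (n + 2) p.2 z = w
    · exact .inr (Finset.mem_filter.2 ⟨hp.last_mem, hpw⟩)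
    · refine .inl (Finset.mem_image.2 ⟨(p.1, w), Finset.mem_filter.2 ⟨?_, rfl⟩, rfl⟩)
      exact (mem_ends (n + 1).succ_ne_zero).2 (wrongPath_succ.2 ⟨p.2, hp, hw, Ne.symm hpw⟩)
  have hB : ∑ w ∈ S (n + 2), (B w).card ≤ (ends S F (n + 2) a z).card :=
    (Finset.sum_le_sum fun w _ => Finset.card_image_le).trans
      ((Finset.sum_card_fiberwise_eq_card_filter ..).trans_le (Finset.card_filter_le ..))
  have hY : ∑ w ∈ S (n + 2), (Y w).card ≤ (S (n + 1)).card :=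
    (Finset.sum_card_fiberwise_eq_card_filter ..).trans_le (Finset.card_filter_le ..)
  have hsum := Finset.card_nsmul_le_sum _ _ _ hcover
  rw [Finset.sum_add_distrib, smul_eq_mul] at hsum
  omega

theorem three_le_card_ends (hS : ∀ i < n + 2, (S (i + 1)).card = 3) (a z : α) :
    3 ≤ (ends S F (n + 2) a z).card := by
  have hle := two_mul_card_le_card_ends_add_card (F := F)
    (fun i hi => (hS i (hi.trans (n + 1).lt_succ_self)).ge) a z
  rw [hS (n + 1) (n + 1).lt_succ_self, hS n (by omega)] at hle
  omega

theorem not_latvianCycleWinnable_of_four_le (hk : 3 ≤ k) {h : ZMod k → ℕ} (h0 : 4 ≤ h 0)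
    (hh : ∀ v, 3 ≤ h v) : ¬ LatvianCycleWinnable h := by
  intro hwin
  obtain ⟨n, rfl⟩ := Nat.exists_eq_add_of_le' hk
  let S (v : ZMod (n + 3)) : Finset ℕ := Finset.range (if v = 0 then 4 else 3)
  obtain ⟨f, hf⟩ := hwin.exists_cycleWins (S := S) fun v => by
    simp only [S, Finset.card_range]
    split_ifs with hv
    exacts [hv ▸ h0, hh v]
  have hcard (i : ℕ) (hi : i < n + 2) : (S (0 + (i + 1 : ℕ))).card = 3 := by
    simp only [S, zero_add, natCast_ne_zero_of_lt i.succ_pos (by omega : i + 1 < n + 3), if_false,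
      Finset.card_range]
  have hlow : ∀ a ∈ S 0, 3 ≤ (ends (fun i => S (0 + i)) (fun i => f (0 + i)) (n + 2) a a).card :=
    fun a _ => three_le_card_ends hcard a a
  have hsum := (Finset.card_nsmul_le_sum _ _ _ hlow).trans (hf.sum_card_ends_le rfl 0)
  have hfirst := hcard 0 (by omega)
  have hlast := hcard (n + 1) (by omega)
  rw [natCast_eq_neg_one rfl, ← sub_eq_add_neg] at hlast
  rw [Nat.zero_add, Nat.cast_one] at hfirst
  rw [hfirst, hlast] at hsum
  simp [S] at hsum

open Classical in
theorem card_filter_exists_wrongPath_le (b z : α) :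
    ((S (n + 1)).filter fun w => ∃ y, WrongPath S F n a b y w ∧ w ≠ F (n + 1) y z).card ≤
      ((ends S F (n + 1) a z).filter (·.1 = b)).card := by
  refine Finset.card_le_card_of_injOn (b, ·) (fun w hw => ?_) (Prod.mk_right_injective b).injOn
  obtain ⟨hwS, y, hy, hne⟩ := Finset.mem_filter.1 hw
  exact Finset.mem_filter.2
    ⟨(mem_ends n.succ_ne_zero).2 (wrongPath_succ.2 ⟨y, hy, hwS, hne⟩), rfl⟩

theorem wrongPath_extend_eq (b : α) : (fun z w => WrongPath S F (n + 1) a b w z) =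
    fun z w => ∃ y, WrongPath S F n a b y w ∧ w ∈ S (n + 1) ∧ w ≠ F (n + 1) y z := by
  simp only [wrongPath_succ]

-- Every color of sage `2` is a wrong-guess companion of one of two colors `b ≠ b'` of sage `1`, so
-- at least one of them has three companions or both have two.
theorem exists_meeting_of_two_four (h₁ : 1 < (S 1).card) (h₂ : 3 < (S 2).card) :
    (∃ b, StronglyMeeting fun w y => WrongPath S F 2 a b y w) ∨
      ∃ b b', b ≠ b' ∧ (WeaklyMeeting fun w y => WrongPath S F 2 a b y w) ∧
        WeaklyMeeting fun w y => WrongPath S F 2 a b' y w := by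
  classical
  obtain ⟨b, hb, b', hb', hne⟩ := Finset.one_lt_card.1 h₁
  let s (b : α) : Finset α := (S 2).filter fun y => b ≠ F 1 a y
  have hpath {b} (hb : b ∈ S 1) : (fun w y => WrongPath S F 2 a b y w) =
      fun w y => y ∈ s b ∧ y ≠ F 2 b w := by
    ext w y
    simp [wrongPath_succ, wrongPath_zero, s, hb]
    tauto
  have hcover : (S 2).card ≤ (s b).card + (s b').card := by
    refine (Finset.card_le_card fun y hy => ?_).trans (Finset.card_union_le ..)
    simp only [s, Finset.mem_union, Finset.mem_filter, hy, true_and]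
    by_contra! h
    exact hne (h.1.trans h.2.symm)
  rcases lt_or_ge 2 (s b).card with h | h
  · exact .inl ⟨b, hpath hb ▸ stronglyMeeting_of_two_lt_card h _⟩
  rcases lt_or_ge 2 (s b').card with h' | h'
  · exact .inl ⟨b', hpath hb' ▸ stronglyMeeting_of_two_lt_card h' _⟩
  exact .inr ⟨b, b', hne, hpath hb ▸ weaklyMeeting_of_one_lt_card (by omega) _,
    hpath hb' ▸ weaklyMeeting_of_one_lt_card (by omega) _⟩

theorem exists_meeting_wrongPath (h₁ : 1 < (S 1).card) (h₂ : 3 < (S 2).card)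
    (hS : ∀ i < n, 2 < (S (i + 3)).card) (a : α) :
    (∃ b, StronglyMeeting fun w y => WrongPath S F (n + 2) a b y w) ∨
      ∃ b b', b ≠ b' ∧ (WeaklyMeeting fun w y => WrongPath S F (n + 2) a b y w) ∧
        WeaklyMeeting fun w y => WrongPath S F (n + 2) a b' y w := by
  induction n with
  | zero => exact exists_meeting_of_two_four h₁ h₂
  | succ n ih =>
    simp only [wrongPath_extend_eq (n := n + 2)]
    obtain ⟨b, hb⟩ | ⟨b, b', hne, hb, hb'⟩ := ih fun i hi => hS i (hi.trans n.lt_succ_self)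
    · exact .inl ⟨b, hb.extend (hS n n.lt_succ_self) _⟩
    · exact .inr ⟨b, b', hne, hb.extend (hS n n.lt_succ_self) _,
        hb'.extend (hS n n.lt_succ_self) _⟩

theorem card_le_card_ends_add_one (h₁ : 1 < (S 1).card) (h₂ : 3 < (S 2).card)
    (hS : ∀ i < n + 1, 2 < (S (i + 3)).card) (a z : α) :
    (S (n + 3)).card ≤ (ends S F (n + 3) a z).card + 1 := by
  classical
  have hslice (b) : ((S (n + 3)).filter fun w => ∃ y, WrongPath S F (n + 2) a b y w ∧
      w ≠ F (n + 3) y z).card ≤ ((ends S F (n + 3) a z).filter (·.1 = b)).card :=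
    card_filter_exists_wrongPath_le b z
  obtain ⟨b, hb⟩ | ⟨b, b', hne, hb, hb'⟩ :=
    exists_meeting_wrongPath (F := F) h₁ h₂ (fun i hi => hS i (hi.trans n.lt_succ_self)) a
  · have := hb.card_filter_le (S (n + 3)) (F (n + 3) · z)
    have := (hslice b).trans (Finset.card_filter_le ..)
    omega
  · have := hb.card_filter_le (S (n + 3)) (F (n + 3) · z)
    have := hb'.card_filter_le (S (n + 3)) (F (n + 3) · z)
    have hdisj : Disjoint ((ends S F (n + 3) a z).filter (·.1 = b))
        ((ends S F (n + 3) a z).filter (·.1 = b')) :=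
      Finset.disjoint_filter.2 fun p _ hp hp' => hne (hp.symm.trans hp')
    have hle := Finset.card_le_card (Finset.union_subset
      (Finset.filter_subset (·.1 = b) _) (Finset.filter_subset (·.1 = b') (ends S F (n + 3) a z)))
    rw [Finset.card_union_of_disjoint hdisj] at hle
    have := hslice b
    have := hslice b'
    have := hS n n.lt_succ_self
    omega

theorem not_latvianCycleWinnable_of_two_four (hk : 4 ≤ k) {h : ZMod k → ℕ} {v : ZMod k}
    (hv : h v = 2) (hsucc : 4 ≤ h (v + 1)) (hpred : 4 ≤ h (v - 1) ∨ 4 ≤ h (v - 2))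
    (hh : ∀ w ≠ v, 3 ≤ h w) : ¬ LatvianCycleWinnable h := by
  wlog hv1 : v = 1 generalizing h v
  · rw [← latvianCycleWinnable_rotate_iff (v - 1)]
    refine this (v := 1) ?_ ?_ ?_ (fun w hw => hh _ fun hwv => hw ?_) rfl
    · rwa [add_sub_cancel]
    · rwa [show 1 + 1 + (v - 1) = v + 1 by ring]
    · rwa [show 1 - 1 + (v - 1) = v - 1 by ring, show 1 - 2 + (v - 1) = v - 2 by ring]
    · linear_combination hwv
  subst hv1
  rw [one_add_one_eq_two] at hsucc
  rw [sub_self, show (1 - 2 : ZMod k) = -1 by ring] at hpred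
  intro hwin
  obtain ⟨n, rfl⟩ := Nat.exists_eq_add_of_le' hk
  obtain ⟨f, hf⟩ := hwin.exists_cycleWins (S := fun v => Finset.range (h v)) fun v => by simp
  let S (i : ℕ) : Finset ℕ := Finset.range (h (0 + i))
  have hlast : (S (n + 3)).card = h (-1) := by
    rw [← natCast_eq_neg_one (k := n + 4) (n := n + 3) rfl]
    simp [S]
  have hS (i : ℕ) (hi : i < n + 1) : 2 < (S (i + 3)).card := by
    have hne : ((i + 3 : ℕ) : ZMod (n + 4)) ≠ 1 := fun heq =>
      natCast_ne_zero_of_lt (i := i + 2) (k := n + 4) (by omega) (by omega)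
        (add_right_cancel (b := 1) (by rw [zero_add]; exact_mod_cast heq))
    simpa only [S, zero_add, Finset.card_range] using Nat.lt_of_succ_le (hh _ hne)
  have h0 : 3 ≤ h 0 :=
    hh 0 (by simpa using (natCast_ne_zero_of_lt (i := 1) one_pos (by omega)).symm)
  have hlow : ∀ a ∈ Finset.range (h 0),
      h (-1) - 1 ≤ (ends S (fun i => f (0 + i)) (n + 3) a a).card := fun a _ => by
    have := card_le_card_ends_add_one (S := S) (F := fun i => f (0 + i)) (by simp [S, hv])
      (by simpa [S] using Nat.lt_of_succ_le hsucc) hS a a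
    omega
  have hsum := (Finset.card_nsmul_le_sum _ _ _ hlow).trans (hf.sum_card_ends_le rfl 0)
  simp only [Finset.card_range, zero_add, hv, zero_sub, smul_eq_mul] at hsum
  have hlast' := hS n n.lt_succ_self
  rw [hlast] at hlast'
  obtain ⟨a, ha⟩ := Nat.exists_eq_add_of_le h0
  obtain ⟨b, hb⟩ := Nat.exists_eq_add_of_le hlast'
  rw [ha, hb] at hsum hpred
  rw [show 3 + b - 1 = b + 2 by omega] at hsum
  rcases hpred with hpred | hpred <;> nlinarith [Nat.zero_le (a * b)]

end Paths

/-! ### Three colors -/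

section ThreeColors

/-- The number of colors `z` with `t x z = y`. With `Function.swap t` in place of `t`, this counts
the occurrences of `y` in a column of the table `t`. -/
def rowCount (t : ZMod 3 → ZMod 3 → ZMod 3) (x y : ZMod 3) : ℕ :=
  Finset.card {z | t x z = y}

theorem sum_rowCount (t : ZMod 3 → ZMod 3 → ZMod 3) (x : ZMod 3) : ∑ y, rowCount t x y = 3 :=
  (Finset.card_eq_sum_card_fiberwise fun _ _ => Finset.mem_coe.2 (Finset.mem_univ _)).symm

theorem sum_rowCount_swap (t : ZMod 3 → ZMod 3 → ZMod 3) (y : ZMod 3) :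
    ∑ z, rowCount (Function.swap t) z y = ∑ x, rowCount t x y := by
  simp only [rowCount, Finset.card_filter, Function.swap]
  exact Finset.sum_comm

theorem rowCount_apply_pos (t : ZMod 3 → ZMod 3 → ZMod 3) (x z : ZMod 3) :
    0 < rowCount t x (t x z) :=
  Finset.card_pos.2 ⟨z, by simp⟩

variable {f : ZMod k → ZMod 3 → ZMod 3 → ZMod 3} {n : ℕ} {v : ZMod k} {o p q : ZMod 3}

theorem CycleWins.apply_eq_or_of_mem_ends (hf : CycleWins (fun _ => Finset.univ) f)
    (hn : n + 3 = k) {e : ZMod 3 × ZMod 3}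
    (he : e ∈ ends (fun _ => Finset.univ) (fun i => f (v + 1 + i)) (n + 1) q p) :
    f (v + 1) p e.1 = q ∨ f v e.2 q = p := by
  refine or_iff_not_imp_right.2 fun hv => ?_
  have hlast : v + 1 + (n + 2 : ℕ) = v := by rw [natCast_eq_neg_one hn]; ring
  refine (hf.eq_of_wrongPath hn (Finset.mem_univ _)
    (wrongPath_succ.2 ⟨e.2, (mem_ends n.succ_ne_zero).1 he, Finset.mem_univ _, ?_⟩)).symm
  rw [hlast]
  exact Ne.symm hv

theorem CycleWins.apply_eq_or_of_mem_ends_of_apply_ne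
    (hf : CycleWins (fun _ => Finset.univ) f) (hn : n + 4 = k) (hv : f v o q ≠ p)
    {e : ZMod 3 × ZMod 3}
    (he : e ∈ ends (fun _ => Finset.univ) (fun i => f (v + 1 + i)) (n + 1) q o) :
    f (v + 1) p e.1 = q ∨ f (v - 1) e.2 p = o := by
  refine or_iff_not_imp_right.2 fun hpred => ?_
  have hext : (e.1, o) ∈ ends (fun _ => Finset.univ) (fun i => f (v + 1 + i)) (n + 2) q p := by
    have hlast : v + 1 + (n + 2 : ℕ) = v - 1 := by
      have := natCast_eq_neg_one hn
      push_cast at this ⊢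
      linear_combination this
    refine (mem_ends (n + 1).succ_ne_zero).2
      (wrongPath_succ.2 ⟨e.2, (mem_ends n.succ_ne_zero).1 he, Finset.mem_univ _, ?_⟩)
    rw [hlast]
    exact Ne.symm hpred
  exact (hf.apply_eq_or_of_mem_ends (n := n + 1) hn hext).resolve_right hv

theorem CycleWins.two_le_rowCount_add (hf : CycleWins (fun _ => Finset.univ) f) (hk : 3 ≤ k)
    (v : ZMod k) (p q : ZMod 3) :
    2 ≤ rowCount (f (v + 1)) p q + rowCount (Function.swap (f v)) q p := by
  obtain ⟨n, hn⟩ := Nat.exists_eq_add_of_le' hk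
  exact two_le_card_add_card_of_ends (S := fun _ => Finset.univ) (fun _ _ => by simp)
    fun e he => by simpa using hf.apply_eq_or_of_mem_ends hn.symm he

theorem CycleWins.two_le_rowCount_add_of_apply_ne (hf : CycleWins (fun _ => Finset.univ) f)
    (hk : 4 ≤ k) (hv : f v o q ≠ p) :
    2 ≤ rowCount (f (v + 1)) p q + rowCount (Function.swap (f (v - 1))) p o := by
  obtain ⟨n, hn⟩ := Nat.exists_eq_add_of_le' hk
  exact two_le_card_add_card_of_ends (S := fun _ => Finset.univ) (fun _ _ => by simp)
    fun e he => by simpa using hf.apply_eq_or_of_mem_ends_of_apply_ne hn.symm hv he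

-- Summed over all `p` and `q`, both sides of `two_le_rowCount_add` are `18`.
theorem CycleWins.rowCount_add_eq_two (hf : CycleWins (fun _ => Finset.univ) f) (hk : 3 ≤ k)
    (v : ZMod k) (p q : ZMod 3) :
    rowCount (f (v + 1)) p q + rowCount (Function.swap (f v)) q p = 2 := by
  have htotal : ∑ e : ZMod 3 × ZMod 3,
      (rowCount (f (v + 1)) e.1 e.2 + rowCount (Function.swap (f v)) e.2 e.1) =
        ∑ _e : ZMod 3 × ZMod 3, 2 := by
    rw [Finset.sum_add_distrib, Fintype.sum_prod_type, Fintype.sum_prod_type_right]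
    simp only [sum_rowCount]
    rfl
  exact ((Finset.sum_eq_sum_iff_of_le fun e _ => hf.two_le_rowCount_add hk v e.1 e.2).1
    htotal.symm (p, q) (Finset.mem_univ _)).symm

/-- The local conditions that a winning strategy on a cycle imposes on the table of each sage. -/
structure Balanced (t : ZMod 3 → ZMod 3 → ZMod 3) : Prop where
  sum_rowCount_left : ∀ y, ∑ x, rowCount t x y = 3
  rowCount_le_two : ∀ x y, rowCount t x y ≤ 2
  rowCount_swap_le_two : ∀ z y, rowCount (Function.swap t) z y ≤ 2
  rowCount_add_le_two : ∀ {x z y}, t x z ≠ y → rowCount t x y + rowCount (Function.swap t) z y ≤ 2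

theorem CycleWins.balanced (hf : CycleWins (fun _ => Finset.univ) f) (hk : 4 ≤ k) (v : ZMod k) :
    Balanced (f v) where
  sum_rowCount_left y := by
    have hsum : ∑ q, (rowCount (f (v + 1)) y q + rowCount (Function.swap (f v)) q y) = 6 := by
      simp only [hf.rowCount_add_eq_two (by omega)]
      rfl
    rw [Finset.sum_add_distrib, sum_rowCount, sum_rowCount_swap] at hsum
    omega
  rowCount_le_two x y := by
    have := hf.rowCount_add_eq_two (by omega) (v - 1) x y
    rw [sub_add_cancel] at this
    omega
  rowCount_swap_le_two z y := by
    have := hf.rowCount_add_eq_two (by omega) v y z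
    omega
  rowCount_add_le_two {x z y} hne := by
    have hle := hf.two_le_rowCount_add_of_apply_ne hk hne
    have hpred := hf.rowCount_add_eq_two (by omega) (v - 1) x y
    have hsucc := hf.rowCount_add_eq_two (by omega) v y z
    rw [sub_add_cancel] at hpred
    omega

namespace Balanced

variable {t : ZMod 3 → ZMod 3 → ZMod 3} {x y z : ZMod 3}

theorem swap (ht : Balanced t) : Balanced (Function.swap t) where
  sum_rowCount_left y := (sum_rowCount_swap t y).trans (ht.sum_rowCount_left y)
  rowCount_le_two := ht.rowCount_swap_le_two
  rowCount_swap_le_two := ht.rowCount_le_two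
  rowCount_add_le_two hne := (add_comm _ _).trans_le (ht.rowCount_add_le_two hne)

theorem exists_apply_ne (ht : Balanced t) (x y : ZMod 3) : ∃ z, t x z ≠ y := by
  by_contra! hconst
  have := ht.rowCount_le_two x y
  simp [rowCount, hconst] at this

theorem exists_rowCount_swap_eq_zero (ht : Balanced t) (h : rowCount t x y = 2) :
    ∃ z, rowCount (Function.swap t) z y = 0 := by
  obtain ⟨z, hz⟩ := ht.exists_apply_ne x y
  have := ht.rowCount_add_le_two hz
  exact ⟨z, by omega⟩

theorem eq_of_apply_eq (ht : Balanced t) (hy : ∀ z, rowCount (Function.swap t) z y = 1)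
    {z z' : ZMod 3} (hz : t x z = y) (hz' : t x z' = y) : z = z' := by
  obtain ⟨w, hw⟩ := ht.exists_apply_ne x y
  have hle : rowCount t x y ≤ 1 := by
    have := ht.rowCount_add_le_two hw
    have := hy w
    omega
  exact Finset.card_le_one.1 hle z (by simpa using hz) z' (by simpa using hz')

end Balanced

theorem card_le_two_of_forall_or {β γ : Type*} {E : Finset (β × γ)} {b b' : β} {y y' : γ}
    (hb : b ≠ b') (hy : y ≠ y')
    (hE : ∀ e ∈ E, (e.1 = b ∨ e.2 = y) ∧ (e.1 = b' ∨ e.2 = y')) : E.card ≤ 2 := by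
  classical
  refine (Finset.card_le_card (t := {(b, y'), (b', y)}) fun e he => ?_).trans Finset.card_le_two
  rw [Finset.mem_insert, Finset.mem_singleton, Prod.ext_iff, Prod.ext_iff]
  obtain ⟨h | h, h' | h'⟩ := hE e he
  · exact absurd (h.symm.trans h') hb
  · exact .inl ⟨h, h'⟩
  · exact .inr ⟨h', h⟩
  · exact absurd (h.symm.trans h') hy

-- Otherwise two wrong guesses `p` of sage `v` between `o` and `q` leave only two pairs of ends for
-- the path through the remaining sages.
theorem CycleWins.exists_rowCount_ne_one (hf : CycleWins (fun _ => Finset.univ) f) (hk : 5 ≤ k)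
    (v : ZMod k) (o q : ZMod 3) :
    (∃ y, rowCount (f v) o y ≠ 1) ∨ ∃ y, rowCount (Function.swap (f v)) q y ≠ 1 := by
  by_contra! h
  obtain ⟨n, rfl⟩ := Nat.exists_eq_add_of_le' hk
  have hpred (p) : rowCount (Function.swap (f (v - 1))) p o = 1 := by
    have := hf.rowCount_add_eq_two (by omega) (v - 1) o p
    rw [sub_add_cancel, h.1] at this
    omega
  have hsucc (p) : rowCount (f (v + 1)) p q = 1 := by
    have := hf.rowCount_add_eq_two (by omega) v p q
    rw [h.2] at this
    omega
  choose y hy using fun p => Finset.card_eq_one.1 (hpred p)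
  choose b hb using fun p => Finset.card_eq_one.1 (hsucc p)
  simp only [Finset.ext_iff, Finset.mem_filter, Finset.mem_univ, true_and,
    Finset.mem_singleton] at hy hb
  have hyinj : Function.Injective y := fun p p' hpp =>
    (hf.balanced (by omega) (v - 1)).eq_of_apply_eq hpred ((hy p _).2 rfl) ((hy p' _).2 hpp)
  have hbinj : Function.Injective b := fun p p' hpp =>
    (hf.balanced (by omega) (v + 1)).swap.eq_of_apply_eq hsucc ((hb p _).2 rfl) ((hb p' _).2 hpp)
  have hends := three_le_card_ends (S := fun _ => Finset.univ) (F := fun i => f (v + 1 + i))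
    (n := n) (fun _ _ => rfl) q o
  obtain ⟨p, p', hp, hp', hne⟩ : ∃ p p', f v o q ≠ p ∧ f v o q ≠ p' ∧ p ≠ p' :=
    (by decide : ∀ m : ZMod 3, ∃ p p', m ≠ p ∧ m ≠ p' ∧ p ≠ p') _
  refine hends.not_gt (Nat.lt_succ_of_le (card_le_two_of_forall_or (hbinj.ne hne) (hyinj.ne hne)
    fun e he => ?_))
  simp only [← hb, ← hy]
  exact ⟨hf.apply_eq_or_of_mem_ends_of_apply_ne (n := n + 1) rfl hp he,
    hf.apply_eq_or_of_mem_ends_of_apply_ne (n := n + 1) rfl hp' he⟩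

section Profiles

/-- The shape `2, 0, 1` of the rows and columns of the counts `rowCount t`, for a table `t` that
occurs in a winning strategy: all of them arise from it by a translation and a reflection. -/
def profile (s : ZMod 3) : ℕ := if s = 0 then 2 else if s = 1 then 0 else 1

theorem profile_eq_zero_iff : ∀ {s}, profile s = 0 ↔ s = 1 := by decide

theorem profile_eq_one_iff : ∀ {s}, profile s = 1 ↔ s = -1 := by decide

theorem profile_eq_two_iff : ∀ {s}, profile s = 2 ↔ s = 0 := by decide

theorem profile_add_eq_two_iff : ∀ {s s'}, profile s + profile s' = 2 ↔ s + s' = 1 := by decide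

theorem mul_self_eq_one_of_ne_zero : ∀ {e : ZMod 3}, e ≠ 0 → e * e = 1 := by decide

variable {g : ZMod 3 → ℕ}

theorem sum_zmod_three {M : Type*} [AddCommMonoid M] (g : ZMod 3 → M) :
    ∑ y, g y = g 0 + g 1 + g 2 :=
  Fin.sum_univ_three g

theorem forall_zmod_three {P : ZMod 3 → Prop} : (∀ y, P y) ↔ P 0 ∧ P 1 ∧ P 2 :=
  ⟨fun h => ⟨h 0, h 1, h 2⟩, fun ⟨h0, h1, h2⟩ y => by fin_cases y <;> assumption⟩

theorem exists_eq_one_of_sum_eq_three (hg : ∑ y, g y = 3) (hle : ∀ y, g y ≤ 2) :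
    ∃ y, g y = 1 := by
  by_contra! hne
  simp only [forall_zmod_three, sum_zmod_three] at hg hle hne
  omega

theorem exists_eq_two_of_sum_eq_three (hg : ∑ y, g y = 3) (hle : ∀ y, g y ≤ 2)
    (hne : ∃ y, g y ≠ 1) : ∃ y, g y = 2 := by
  contrapose! hne
  simp only [forall_zmod_three, sum_zmod_three] at hg hle hne ⊢
  omega

theorem exists_eq_profile (hg : ∑ y, g y = 3) (hle : ∀ y, g y ≤ 2) (hne : ∃ y, g y ≠ 1) :
    ∃ m, ∃ e ≠ 0, ∀ y, g y = profile (e * (y - m)) := by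
  have hfin : ∀ g : ZMod 3 → Fin 3, ∑ y, (g y : ℕ) = 3 → (∃ y, (g y : ℕ) ≠ 1) →
      ∃ m, ∃ e ≠ 0, ∀ y, (g y : ℕ) = profile (e * (y - m)) := by decide
  exact hfin (fun y => ⟨g y, Nat.lt_succ_of_le (hle y)⟩) hg hne

theorem eq_of_eq_one (hg : ∑ y, g y = 3) (hle : ∀ y, g y ≤ 2) (hne : ∃ y, g y ≠ 1) {a a' : ZMod 3}
    (ha : g a = 1) (ha' : g a' = 1) : a = a' := by
  obtain ⟨m, e, he, h⟩ := exists_eq_profile hg hle hne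
  rw [h, profile_eq_one_iff] at ha ha'
  exact sub_left_injective (mul_left_cancel₀ he (ha.trans ha'.symm))

theorem exists_forall_eq_profile {r : ZMod 3 → ZMod 3 → ℕ} (hrow : ∀ x, ∑ y, r x y = 3)
    (hcol : ∀ y, ∑ x, r x y = 3) (hle : ∀ x y, r x y ≤ 2) (hne : ∀ x, ∃ y, r x y ≠ 1) :
    ∃ e ≠ 0, ∃ m : ZMod 3 → ZMod 3, Function.Injective m ∧
      ∀ x y, r x y = profile (e * (y - m x)) := by
  choose m e he hr using fun x => exists_eq_profile (hrow x) (hle x) (hne x)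
  have hone (x y) : r x y = 1 ↔ y = m x - e x := by
    rw [hr, profile_eq_one_iff]
    generalize m x = a
    have := he x
    generalize e x = b at this
    decide +revert
  have htwo (x y) : r x y = 2 ↔ y = m x := by
    rw [hr, profile_eq_two_iff, mul_eq_zero, or_iff_right (he x), sub_eq_zero]
  have hone_surj : Function.Surjective fun x => m x - e x := fun y => by
    obtain ⟨x, hx⟩ := exists_eq_one_of_sum_eq_three (hcol y) (hle · y)
    exact ⟨x, ((hone x y).1 hx).symm⟩
  have htwo_surj : Function.Surjective m := fun y => by
    obtain ⟨x, hx⟩ : ∃ x, r x y ≠ 1 := by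
      by_contra! hall
      obtain ⟨x, hx⟩ := exists_eq_one_of_sum_eq_three (hcol (y + 1)) (hle · (y + 1))
      exact absurd (((hone x _).1 hx).trans ((hone x y).1 (hall x)).symm) (by simp)
    obtain ⟨x, hx⟩ := exists_eq_two_of_sum_eq_three (hcol y) (hle · y) ⟨x, hx⟩
    exact ⟨x, ((htwo x y).1 hx).symm⟩
  have hm := Finite.injective_iff_surjective.2 htwo_surj
  have hsum : ∑ x, e x = 0 := by
    have h₁ := Equiv.sum_comp (.ofBijective _ (Finite.surjective_iff_bijective.1 hone_surj)) id
    have h₂ := Equiv.sum_comp (.ofBijective _ (Finite.surjective_iff_bijective.1 htwo_surj)) id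
    simp only [Equiv.ofBijective_apply, id, Finset.sum_sub_distrib] at h₁ h₂
    rwa [h₂, sub_eq_self] at h₁
  have hconst : ∀ x, e x = e 0 :=
    (by decide : ∀ e : ZMod 3 → ZMod 3, (∀ x, e x ≠ 0) → ∑ x, e x = 0 → ∀ x, e x = e 0) e he hsum
  exact ⟨e 0, he 0, m, hm, fun x y => by rw [hr, hconst]⟩

end Profiles

namespace Balanced

variable {t : ZMod 3 → ZMod 3 → ZMod 3}

theorem exists_rowCount_ne_one (ht : Balanced t) (hne : ∀ x z, (∃ y, rowCount t x y ≠ 1) ∨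
    ∃ y, rowCount (Function.swap t) z y ≠ 1) (x : ZMod 3) : ∃ y, rowCount t x y ≠ 1 := by
  by_contra! hx
  have hzero (y) : ∃ x', rowCount t x' y = 0 := by
    obtain ⟨z, hz⟩ := Finset.card_pos.1 (zero_lt_one.trans_eq (hx y).symm)
    obtain ⟨y', hy'⟩ := exists_eq_two_of_sum_eq_three (sum_rowCount _ z)
      (ht.rowCount_swap_le_two z) ((hne x z).resolve_left (not_exists_not.2 hx))
    obtain rfl : t x z = y' := by
      by_contra hxz
      have := ht.rowCount_add_le_two hxz
      have := hx y'
      omega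
    rw [← (Finset.mem_filter.1 hz).2]
    exact ht.swap.exists_rowCount_swap_eq_zero hy'
  obtain ⟨y, hy⟩ := exists_eq_one_of_sum_eq_three (sum_rowCount t (x + 1))
    (ht.rowCount_le_two (x + 1))
  obtain ⟨x', hx'⟩ := hzero y
  refine absurd (eq_of_eq_one (ht.sum_rowCount_left y) (ht.rowCount_le_two · y)
    ⟨x', by omega⟩ hy (hx y)) (by simp)

-- A color that is the majority of a column is unique in one of the rows that meet the column in it,
-- which ties the orientation of the column to that of the rows.
theorem exists_rowCount_eq_profile (ht : Balanced t) (hne : ∀ x z, (∃ y, rowCount t x y ≠ 1) ∨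
    ∃ y, rowCount (Function.swap t) z y ≠ 1) :
    ∃ e ≠ 0, ∃ m m' : ZMod 3 → ZMod 3, (∀ x y, rowCount t x y = profile (e * (y - m x))) ∧
      ∀ z y, rowCount (Function.swap t) z y = profile (e * (y - m' z)) := by
  obtain ⟨e, he, m, hm, hrow⟩ := exists_forall_eq_profile (sum_rowCount t) ht.sum_rowCount_left
    ht.rowCount_le_two (ht.exists_rowCount_ne_one hne)
  obtain ⟨e', he', m', -, hcol⟩ := exists_forall_eq_profile (sum_rowCount _)
    ht.swap.sum_rowCount_left ht.swap.rowCount_le_two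
    (ht.swap.exists_rowCount_ne_one fun z x => (hne x z).symm)
  obtain ⟨x, hx, hxm⟩ : ∃ x, t x 0 = m' 0 ∧ m' 0 ≠ m x := by
    have htwo : 1 < rowCount (Function.swap t) 0 (m' 0) := by simp [hcol, profile]
    obtain ⟨x₁, hx₁, x₂, hx₂, h₁₂⟩ := Finset.one_lt_card.1 htwo
    simp only [Finset.mem_filter, Function.swap] at hx₁ hx₂
    by_cases h : m' 0 = m x₁
    · exact ⟨x₂, hx₂.2, fun h' => h₁₂ (hm (h.symm.trans h'))⟩
    · exact ⟨x₁, hx₁.2, h⟩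
  have hrowx : e * (m x - m' 0) = 1 := by
    have hne : e * (m' 0 - m x) ≠ 0 := mul_ne_zero he (sub_ne_zero.2 hxm)
    have hpos : profile (e * (m' 0 - m x)) ≠ 0 := by
      rw [← hrow, ← hx]
      exact (rowCount_apply_pos t x 0).ne'
    have := (by decide : ∀ s, s ≠ 0 → profile s ≠ 0 → s = -1) _ hne hpos
    linear_combination -this
  have hcolx : e' * (m x - m' 0) = 1 := by
    have hle := ht.rowCount_add_le_two (hx.trans_ne hxm)
    have htwo : rowCount t x (m x) = 2 := by rw [hrow, sub_self, mul_zero, profile_eq_two_iff]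
    rw [← profile_eq_zero_iff, ← hcol]
    omega
  obtain rfl : e = e' := mul_right_cancel₀ (sub_ne_zero.2 hxm.symm) (hrowx.trans hcolx.symm)
  exact ⟨e, he, m, m', hrow, hcol⟩

theorem not_rowCount_eq_one_and (ht : Balanced t) {e : ZMod 3} (he : e ≠ 0)
    {m m' : ZMod 3 → ZMod 3} (hrow : ∀ x y, rowCount t x y = profile (e * (y - m x)))
    (hcol : ∀ z y, rowCount (Function.swap t) z y = profile (e * (y - m' z))) {x z : ZMod 3}
    (hx : rowCount t x (t x z) = 1) : rowCount (Function.swap t) z (t x z) ≠ 1 := by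
  intro hz
  rw [hrow, profile_eq_one_iff] at hx
  rw [hcol, profile_eq_one_iff] at hz
  have hm : m x = m' z := sub_right_injective (mul_left_cancel₀ he (hx.trans hz.symm))
  have hne : t x z ≠ m x := fun h => by simp [h] at hx
  have := ht.rowCount_add_le_two hne
  simp [hrow, hcol, hm, profile] at this

end Balanced

theorem exists_sub_eq_add_const [NeZero k] {K : Type*} [Field K] (hk : (k : K) ≠ 0)
    (μ : ZMod k → K) : ∃ δ, ∃ c : ZMod k → K, ∀ v, c v - c (v - 1) = μ v + δ := by
  let δ := -(∑ i ∈ Finset.range k, μ i) / k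
  let u (i : ℕ) : K := ∑ j ∈ Finset.range i, (μ j + δ)
  obtain ⟨n, hn⟩ := Nat.exists_eq_succ_of_ne_zero (NeZero.ne k)
  have hu : u (n + 1) = u 0 := by
    rw [← Nat.succ_eq_add_one, ← hn]
    simp [u, δ, Finset.sum_add_distrib, mul_div_cancel₀ _ hk]
  obtain ⟨c, hc⟩ := exists_coloring_of_apply_eq u hn.symm hu (-1 : ZMod k)
  refine ⟨δ, c, fun v => ?_⟩
  have hv := ZMod.val_lt v
  have hsucc := hc (v.val + 1) (by omega)
  have hval := hc v.val (by omega)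
  rw [Nat.cast_add, Nat.cast_one, ZMod.natCast_zmod_val, neg_add_cancel_comm_assoc] at hsucc
  rw [ZMod.natCast_zmod_val, neg_add_eq_sub] at hval
  rw [hsucc, hval, sub_eq_iff_eq_add']
  simp [u, Finset.sum_range_succ]

theorem CycleWins.exists_rowCount_eq_profile (hf : CycleWins (fun _ => Finset.univ) f)
    (hk : 5 ≤ k) : ∃ e : ZMod k → ZMod 3, ∃ μ : ZMod k → ZMod 3, (∀ v, e v ≠ 0) ∧
      (∀ v p q, rowCount (f v) p q = profile (e v * q - e (v - 1) * p - μ v)) ∧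
      ∀ v x z, rowCount (f v) x (f v x z) = 1 →
        rowCount (Function.swap (f v)) z (f v x z) ≠ 1 := by
  have hbalanced (v) : Balanced (f v) := hf.balanced (by omega) v
  choose e he m m' hrow hcol using
    fun v => (hbalanced v).exists_rowCount_eq_profile (hf.exists_rowCount_ne_one hk v)
  refine ⟨e, fun v => e v * m v 0, he, fun v p q => ?_, fun v x z =>
    (hbalanced v).not_rowCount_eq_one_and (he v) (hrow v) (hcol v)⟩
  have hsum (p) : e v * (0 - m v p) + e (v - 1) * (p - m' (v - 1) 0) = 1 := by
    rw [← profile_add_eq_two_iff, ← hrow, ← hcol]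
    simpa using hf.rowCount_add_eq_two (by omega) (v - 1) p 0
  rw [hrow]
  congr 1
  linear_combination hsum p - hsum 0

-- If the colors, up to the signs `e`, increase by `μ v + δ` with a constant `δ`, then all sages see
-- the same counts `profile δ` and `2 - profile δ`.
theorem not_cycleWins_of_not_three_dvd (hk : 5 ≤ k) (hk3 : ¬ 3 ∣ k) :
    ¬ CycleWins (fun _ => Finset.univ) f := by
  intro hf
  obtain ⟨e, μ, he, hrow, hunique⟩ := hf.exists_rowCount_eq_profile hk
  have : NeZero k := ⟨by omega⟩
  obtain ⟨δ, b, hb⟩ := exists_sub_eq_add_const ((ZMod.natCast_eq_zero_iff k 3).not.2 hk3) μ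
  let c (v) : ZMod 3 := e v * b v
  have hcount (v) : rowCount (f v) (c (v - 1)) (c v) = profile δ := by
    rw [hrow]
    congr 1
    linear_combination hb v + b v * mul_self_eq_one_of_ne_zero (he v) -
      b (v - 1) * mul_self_eq_one_of_ne_zero (he (v - 1))
  obtain ⟨v, hv⟩ := hf c fun _ => Finset.mem_univ _
  have hcount_swap : profile δ + rowCount (Function.swap (f v)) (c (v + 1)) (c v) = 2 := by
    rw [← hf.rowCount_add_eq_two (by omega) v (c v) (c (v + 1)), ← hcount (v + 1),
      add_sub_cancel_right]
  have hpos := rowCount_apply_pos (f v) (c (v - 1)) (c (v + 1))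
  have hpos_swap := rowCount_apply_pos (Function.swap (f v)) (c (v + 1)) (c (v - 1))
  rw [Function.swap, ← hv] at hpos_swap
  rw [← hv, hcount] at hpos
  refine hunique v (c (v - 1)) (c (v + 1)) ?_ ?_
  all_goals
    rw [← hv]
    have := hcount v
    omega

theorem not_latvianCycleWinnable_of_not_three_dvd (hk : 5 ≤ k) (hk3 : ¬ 3 ∣ k) {h : ZMod k → ℕ}
    (hh : ∀ v, 3 ≤ h v) : ¬ LatvianCycleWinnable h := by
  intro hwin
  obtain ⟨f, hf⟩ := hwin.exists_cycleWins (S := fun _ => (Finset.univ : Finset (ZMod 3))) hh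
  exact not_cycleWins_of_not_three_dvd hk hk3 hf

end ThreeColors

theorem LatvianCycleWinnable.le_three_of_eq_two {h : ZMod k → ℕ} (hwin : LatvianCycleWinnable h)
    (hk : 4 ≤ k) {v : ZMod k} (hv : h v = 2) (hh : ∀ w ≠ v, 3 ≤ h w) :
    (h (v - 1) ≤ 3 ∧ h (v + 1) ≤ 3) ∨ (h (v + 1) ≤ 3 ∧ h (v + 2) ≤ 3) ∨
      (h (v - 2) ≤ 3 ∧ h (v - 1) ≤ 3) := by
  have hright : ¬ (4 ≤ h (v + 1) ∧ (4 ≤ h (v - 1) ∨ 4 ≤ h (v - 2))) := fun hfour =>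
    not_latvianCycleWinnable_of_two_four hk hv hfour.1 hfour.2 hh hwin
  have hleft : ¬ (4 ≤ h (v - 1) ∧ (4 ≤ h (v + 1) ∨ 4 ≤ h (v + 2))) := fun hfour =>
    not_latvianCycleWinnable_of_two_four (h := fun w => h (-w)) (v := -v) hk (by simpa using hv)
      (by simpa [sub_eq_neg_add] using hfour.1) (by simpa [add_comm] using hfour.2)
      (fun w hw => hh _ fun hwv => hw (neg_eq_iff_eq_neg.1 hwv)) hwin.reflect
  omega

theorem LatvianCycleWinnable.exists_eq_two_or_eq_three {h : ZMod k → ℕ}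
    (hwin : LatvianCycleWinnable h) (hk : 4 ≤ k) (hh : ∀ w, 2 ≤ h w) {v : ZMod k} (hv : h v = 2) :
    (∃ w, w ≠ v ∧ h w = 2) ∨ (h (v - 1) = 3 ∧ h (v + 1) = 3) ∨
      (h (v + 1) = 3 ∧ h (v + 2) = 3) ∨ (h (v - 2) = 3 ∧ h (v - 1) = 3) := by
  refine or_iff_not_imp_left.2 fun htwo => ?_
  have hge (w) (hw : w ≠ v) : 3 ≤ h w := (hh w).lt_of_ne' fun hw' => htwo ⟨w, hw, hw'⟩
  have h1 : (1 : ZMod k) ≠ 0 := by simpa using natCast_ne_zero_of_lt (i := 1) one_pos (by omega)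
  have h2 : (2 : ZMod k) ≠ 0 := by simpa using natCast_ne_zero_of_lt (i := 2) two_pos (by omega)
  have := hwin.le_three_of_eq_two hk hv hge
  have := hge (v + 1) (by simpa using h1)
  have := hge (v - 1) (by simpa using h1)
  have := hge (v + 2) (by simpa using h2)
  have := hge (v - 2) (by simpa using h2)
  omega

theorem LatvianCycleWinnable.eq_four_or_three_dvd {h : ZMod k → ℕ} (hwin : LatvianCycleWinnable h)
    (hk : 3 ≤ k) (hh : ∀ v, 3 ≤ h v) : k = 4 ∨ 3 ∣ k := by
  by_contra! hne
  have : k ≠ 3 := by rintro rfl; exact hne.2 dvd_rfl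
  exact not_latvianCycleWinnable_of_not_three_dvd (by omega) hne.2 hh hwin

theorem LatvianCycleWinnable.le_three {h : ZMod k → ℕ} (hwin : LatvianCycleWinnable h)
    (hk : 3 ≤ k) (hh : ∀ v, 3 ≤ h v) (v : ZMod k) : h v ≤ 3 := by
  by_contra! hv
  exact not_latvianCycleWinnable_of_four_le hk (h := fun w => h (w + v))
    (by simpa using Nat.succ_le_of_lt hv) (fun w => hh _) (hwin.rotate v)

end HatGame

/-- Classification of winnable Latvian cycles with all hatnesses between 2 and 4. -/
theorem latvian_cycle_low_hatness_winnable_iff (k : ℕ) (hk : 3 ≤ k)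
    (h : ZMod k → ℕ) (hh : ∀ v, 2 ≤ h v ∧ h v ≤ 4) :
    HatGame.Winnable (fun i j : ZMod k => j = i + 1 ∨ j = i - 1) (fun _ => 1) h ↔
      ((k = 3 ∧ ∃ v : ZMod k, h v = 2) ∨
       ((k = 4 ∨ 3 ∣ k) ∧ ∀ v : ZMod k, h v ≤ 3) ∨
       (∃ v w : ZMod k, v ≠ w ∧ h v = 2 ∧ h w = 2) ∨
       (∃ i : ZMod k, h (i - 1) = 3 ∧ h i = 2 ∧ h (i + 1) = 3) ∨
       (∃ i : ZMod k, h i = 2 ∧ h (i + 1) = 3 ∧ h (i + 2) = 3) ∨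
       (∃ i : ZMod k, h i = 3 ∧ h (i + 1) = 3 ∧ h (i + 2) = 2)) := by
  have : NeZero k := ⟨by omega⟩
  have hle (v) := (hh v).2
  refine ⟨fun hwin : HatGame.LatvianCycleWinnable h => ?_, ?_⟩
  · by_cases hge : ∀ v, 3 ≤ h v
    · exact .inr <| .inl ⟨hwin.eq_four_or_three_dvd hk hge, hwin.le_three hk hge⟩
    obtain ⟨v, hv⟩ := not_forall.1 hge
    replace hv : h v = 2 := (Nat.le_of_not_lt hv).antisymm (hh v).1
    obtain rfl | hk4 : k = 3 ∨ 4 ≤ k := by omega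
    · exact .inl ⟨rfl, v, hv⟩
    refine .inr <| .inr ?_
    obtain ⟨w, hwv, hw⟩ | h' | h' | h' :=
      hwin.exists_eq_two_or_eq_three hk4 (fun w => (hh w).1) hv
    · exact .inl ⟨w, v, hwv, hw, hv⟩
    · exact .inr <| .inl ⟨v, h'.1, hv, h'.2⟩
    · exact .inr <| .inr <| .inl ⟨v, hv, h'⟩
    · exact .inr <| .inr <| .inr
        ⟨v - 2, h'.1, by convert h'.2 using 2; ring, by rwa [sub_add_cancel]⟩
  · rintro (⟨rfl, v, hv⟩ | ⟨rfl | hk3, h3⟩ | ⟨v, w, hvw, hv, hw⟩ | ⟨i, h₁, h₂, h₃⟩ |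
      ⟨i, h₁, h₂, h₃⟩ | ⟨i, h₁, h₂, h₃⟩)
    · exact (HatGame.latvianCycleWinnable_rotate_iff v).1
        (HatGame.latvianCycleWinnable_of_le_two (fun u => hle _) (by simpa using hv.le))
    · exact HatGame.latvianCycleWinnable_of_eq_four h3
    · exact HatGame.latvianCycleWinnable_of_three_dvd hk3 h3
    · exact HatGame.latvianCycleWinnable_of_le_two_of_le_two hle hvw hv.le hw.le
    · exact HatGame.latvianCycleWinnable_of_three_two_three hk hle h₁.le h₂.le h₃.le
    · exact HatGame.latvianCycleWinnable_of_two_three_three hk hle h₁.le h₂.le h₃.le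
    · exact HatGame.latvianCycleWinnable_of_three_three_two hk hle h₁.le h₂.le h₃.le
end

section
/- Let (D, g, h) be a winnable Czech hat game and Y a set of vertices containing a vertex b with h b = 2 (hence g b = 1). Form the game on Option V by attaching a new vertex x universal to Y with hatness h x = 3 and guessness g x = 1, replacing the hatness h v by h v + g v for every v ∈ Y other than b, and leaving all other hatnesses and all guessnesses unchanged. The resulting Czech game is winnable. -/
/-!
The new vertex `x` and `b` can win the two-vertex game between them in which `x` has only its first
two colors. Call a color fresh if it lies beyond the hatness of its vertex in that game or in the
given one: this is the third color of `x`, and `g v` colors at each `v ∈ Y` other than `b`.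

While `x` wears one of its first two colors, `b` plays the two-vertex game and the other members of
`Y` guess their fresh colors; everybody else, and everybody once `x` wears its fresh color, plays
the given strategy. The vertex `x` guesses its fresh color if it sees a fresh color, and plays the
two-vertex game if it sees none. So a fresh color of `x` is guessed by `x` unless no fresh color
occurs elsewhere, and then the given strategy wins; when the color of `x` is not fresh, either some
vertex wears a fresh color and guesses it, or `x` and `b` both play the two-vertex game.
-/

namespace HatGame

/-- The visibility relation obtained from `D` by attaching a new sage `none` who sees, and is seen
by, exactly the members of `Y`. -/
def attach {V : Type*} (D : V → V → Prop) (Y : Set V) : Option V → Option V → Prop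
  | none, none => False
  | none, some v => v ∈ Y
  | some v, none => v ∈ Y
  | some u, some v => D u v

/-- The Czech game on two sages who see each other, with guessnesses `g₁`, `g₂` and hatnesses
`h₁`, `h₂`, is winnable. A strategy is a pair of set-valued functions, because each sage sees only
the color of the other. -/
def EdgeWinnable (g₁ h₁ g₂ h₂ : ℕ) : Prop :=
  ∃ (A : Fin h₂ → Finset (Fin h₁)) (B : Fin h₁ → Finset (Fin h₂)),
    (∀ j, (A j).card = g₁) ∧ (∀ i, (B i).card = g₂) ∧ ∀ i j, i ∈ A j ∨ j ∈ B i

theorem edgeWinnable_one_succ (k : ℕ) : EdgeWinnable 1 (k + 1) k (k + 1) :=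
  ⟨fun j => {j}, fun i => {i}ᶜ, by simp, by simp [Finset.card_compl], fun i j => by
    simpa [eq_comm] using em (i = j)⟩

/-- The colors that a sage of hatness `n` gains when the hatness is raised to `N`. -/
def freshColors (n N : ℕ) : Finset (Fin N) :=
  {i | n ≤ i.val}

theorem mem_freshColors {n N : ℕ} {i : Fin N} : i ∈ freshColors n N ↔ n ≤ i.val := by
  simp [freshColors]

theorem card_freshColors (n k : ℕ) : (freshColors n (n + k)).card = k := by
  have hcompl : freshColors n (n + k) = ({i | i.val < n} : Finset _)ᶜ := by
    ext i
    simp [mem_freshColors]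
  rw [hcompl, Finset.card_compl, Fin.card_filter_val_lt, Fintype.card_fin]
  omega

theorem mem_map_castLEEmb_of_ofNat_mem {n N : ℕ} [NeZero n] (hle : n ≤ N) {s : Finset (Fin n)}
    {i : Fin N} (hi : i.val < n) (hs : Fin.ofNat n i.val ∈ s) : i ∈ s.map (Fin.castLEEmb hle) :=
  Finset.mem_map.2 ⟨_, hs, Fin.ext (Nat.mod_eq_of_lt hi)⟩

section Strategies

variable {V : Type*} {h H : V → ℕ} [∀ v, NeZero (h v)]

/-- The coloring of the game with hatness `h` that agrees with `c` at every sage whose color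
exists in that game; the remaining colors are reduced modulo `h`, which is an arbitrary choice. -/
def truncate (h : V → ℕ) [∀ v, NeZero (h v)] (c : ∀ v, Fin (H v)) (v : V) : Fin (h v) :=
  Fin.ofNat (h v) (c v).val

/-- The strategy `F` of a game with hatness `h`, played with the greater hatness `H`. -/
def liftStrategy (hle : ∀ v, h v ≤ H v) (F : ∀ v, (∀ u, Fin (h u)) → Finset (Fin (h v)))
    (v : V) (c : ∀ u, Fin (H u)) : Finset (Fin (H v)) :=
  (F v (truncate h c)).map (Fin.castLEEmb (hle v))

theorem liftStrategy_congr {D : V → V → Prop} (hle : ∀ v, h v ≤ H v)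
    {F : ∀ v, (∀ u, Fin (h u)) → Finset (Fin (h v))}
    (hF : ∀ v c c', (∀ u, D v u → c u = c' u) → F v c = F v c')
    {v : V} {c c' : ∀ u, Fin (H u)} (hc : ∀ u, D v u → c u = c' u) :
    liftStrategy hle F v c = liftStrategy hle F v c' := by
  have htruncate : F v (truncate h c) = F v (truncate h c') :=
    hF v _ _ fun u hu => by simp only [truncate, hc u hu]
  simp only [liftStrategy, htruncate]

theorem exists_mem_liftStrategy (hle : ∀ v, h v ≤ H v)
    {F : ∀ v, (∀ u, Fin (h u)) → Finset (Fin (h v))} (hF : ∀ c, ∃ v, c v ∈ F v c)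
    {c : ∀ u, Fin (H u)} (hc : ∀ v, (c v).val < h v) : ∃ v, c v ∈ liftStrategy hle F v c :=
  (hF (truncate h c)).imp fun v hv => mem_map_castLEEmb_of_ofNat_mem (hle v) (hc v) hv

open scoped Classical in
/-- The guess of the attached sage, of hatness `m + k`, at the coloring `c`: her last `k` colors if
she sees a fresh color in `S`, and otherwise what the edge strategy `B` makes of the color of `b`.
-/
noncomputable def newGuess {m : ℕ} (k : ℕ) (S : Set V) (b : V) (B : Fin (h b) → Finset (Fin m))
    (c : ∀ v, Fin (H v)) : Finset (Fin (m + k)) :=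
  if ∃ v ∈ S, c v ∈ freshColors (h v) (H v) then Finset.univ.map (Fin.natAddEmb m)
  else (B (truncate h c b)).map (Fin.castAddEmb k)

/-- The guess of the sage `v` when the attached sage wears `x` and the others wear `c`. If `x` is
among the first `m` colors, members of `S` guess their fresh colors and `b` plays the edge strategy
`A`; all other guesses follow `F`. -/
def oldGuess [DecidableEq V] {m k : ℕ} (S : Set V) [DecidablePred (· ∈ S)] (b : V)
    (hle : ∀ v, h v ≤ H v) (F : ∀ v, (∀ u, Fin (h u)) → Finset (Fin (h v)))
    (A : Fin m → Finset (Fin (h b))) (v : V) (x : Fin (m + k)) (c : ∀ u, Fin (H u)) :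
    Finset (Fin (H v)) :=
  Fin.addCases
    (fun i => Function.update
      (S.piecewise (fun u => freshColors (h u) (H u)) fun u => liftStrategy hle F u c)
      b ((A i).map (Fin.castLEEmb (hle b))) v)
    (fun _ => liftStrategy hle F v c) x

variable {m k : ℕ} {S Y : Set V} {b : V}

theorem card_newGuess {B : Fin (h b) → Finset (Fin m)} (hB : ∀ i, (B i).card = k)
    (c : ∀ v, Fin (H v)) : (newGuess k S b B c).card = k := by
  unfold newGuess
  split_ifs <;> simp [hB]

theorem newGuess_congr (hSY : S ⊆ Y) (hb : b ∈ Y) {B : Fin (h b) → Finset (Fin m)}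
    {c c' : ∀ v, Fin (H v)} (hc : ∀ v ∈ Y, c v = c' v) :
    newGuess k S b B c = newGuess k S b B c' := by
  classical
  have hfresh : (∃ v ∈ S, c v ∈ freshColors (h v) (H v)) ↔
      ∃ v ∈ S, c' v ∈ freshColors (h v) (H v) :=
    exists_congr fun v => and_congr_right fun hv => by rw [hc v (hSY hv)]
  exact if_congr hfresh rfl (by simp only [truncate, hc b hb])

variable [DecidableEq V] [DecidablePred (· ∈ S)] {hle : ∀ v, h v ≤ H v}
  {F : ∀ v, (∀ u, Fin (h u)) → Finset (Fin (h v))} {A : Fin m → Finset (Fin (h b))}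

theorem oldGuess_natAdd (v : V) (j : Fin k) (c : ∀ u, Fin (H u)) :
    oldGuess S b hle F A v (Fin.natAdd m j) c = liftStrategy hle F v c := by
  simp [oldGuess]

theorem oldGuess_castAdd_self (i : Fin m) (c : ∀ u, Fin (H u)) :
    oldGuess S b hle F A b (Fin.castAdd k i) c = (A i).map (Fin.castLEEmb (hle b)) := by
  simp [oldGuess]

theorem oldGuess_castAdd_of_mem {v : V} (hvb : v ≠ b) (hv : v ∈ S) (i : Fin m)
    (c : ∀ u, Fin (H u)) :
    oldGuess S b hle F A v (Fin.castAdd k i) c = freshColors (h v) (H v) := by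
  simp [oldGuess, hvb, hv]

theorem oldGuess_of_notMem {v : V} (hvb : v ≠ b) (hv : v ∉ S) (x : Fin (m + k))
    (c : ∀ u, Fin (H u)) : oldGuess S b hle F A v x c = liftStrategy hle F v c := by
  cases x using Fin.addCases <;> simp [oldGuess, hvb, hv]

theorem card_oldGuess {g : V → ℕ} (hH : ∀ v ∈ S, H v = h v + g v)
    (hF : ∀ v c, (F v c).card = g v) (hA : ∀ i, (A i).card = g b)
    (v : V) (x : Fin (m + k)) (c : ∀ u, Fin (H u)) :
    (oldGuess S b hle F A v x c).card = g v := by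
  have hlift : (liftStrategy hle F v c).card = g v := by simp [liftStrategy, hF]
  cases x using Fin.addCases with
  | right j => rw [oldGuess_natAdd, hlift]
  | left i =>
    obtain rfl | hvb := eq_or_ne v b
    · rw [oldGuess_castAdd_self, Finset.card_map, hA]
    by_cases hv : v ∈ S
    · rw [oldGuess_castAdd_of_mem hvb hv, hH v hv, card_freshColors]
    · rw [oldGuess_of_notMem hvb hv, hlift]

theorem oldGuess_congr {D : V → V → Prop}
    (hF : ∀ v c c', (∀ u, D v u → c u = c' u) → F v c = F v c') (hSY : S ⊆ Y) (hb : b ∈ Y)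
    {v : V} {x x' : Fin (m + k)} {c c' : ∀ u, Fin (H u)} (hx : v ∈ Y → x = x')
    (hc : ∀ u, D v u → c u = c' u) :
    oldGuess S b hle F A v x c = oldGuess S b hle F A v x' c' := by
  have hlift := liftStrategy_congr hle hF hc
  by_cases hv : v ∈ Y
  · obtain rfl := hx hv
    cases x using Fin.addCases with
    | right j => rw [oldGuess_natAdd, oldGuess_natAdd, hlift]
    | left i =>
      obtain rfl | hvb := eq_or_ne v b
      · rw [oldGuess_castAdd_self, oldGuess_castAdd_self]
      by_cases hvS : v ∈ S
      · rw [oldGuess_castAdd_of_mem hvb hvS, oldGuess_castAdd_of_mem hvb hvS]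
      · rw [oldGuess_of_notMem hvb hvS, oldGuess_of_notMem hvb hvS, hlift]
  · have hvb : v ≠ b := fun hvb => hv (hvb ▸ hb)
    have hvS : v ∉ S := fun hvS => hv (hSY hvS)
    rw [oldGuess_of_notMem hvb hvS, oldGuess_of_notMem hvb hvS, hlift]

theorem mem_newGuess_or_exists_mem_oldGuess {B : Fin (h b) → Finset (Fin m)}
    (hH : ∀ v ∉ S, H v = h v) (hbS : b ∉ S) (hF : ∀ c, ∃ v, c v ∈ F v c)
    (hAB : ∀ i j, i ∈ A j ∨ j ∈ B i) (x : Fin (m + k)) (c : ∀ v, Fin (H v)) :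
    x ∈ newGuess k S b B c ∨ ∃ v, c v ∈ oldGuess S b hle F A v x c := by
  have hold : ∀ v ∉ S, (c v).val < h v := fun v hv => (c v).isLt.trans_eq (hH v hv)
  by_cases hfresh : ∃ v ∈ S, c v ∈ freshColors (h v) (H v)
  · cases x using Fin.addCases with
    | right j => exact .inl (by simp [newGuess, if_pos hfresh])
    | left i =>
      obtain ⟨v, hvS, hv⟩ := hfresh
      have hvb : v ≠ b := fun hvb => hbS (hvb ▸ hvS)
      exact .inr ⟨v, by rwa [oldGuess_castAdd_of_mem hvb hvS]⟩
  · cases x using Fin.addCases with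
    | right j =>
      have hc : ∀ v, (c v).val < h v := fun v => by
        by_contra! hv
        exact hfresh ⟨v, by_contra fun hvS => hv.not_gt (hold v hvS), mem_freshColors.2 hv⟩
      simpa only [oldGuess_natAdd] using Or.inr (exists_mem_liftStrategy hle hF hc)
    | left i =>
      refine (hAB (truncate h c b) i).symm.imp (fun hi => ?_) fun hi => ⟨b, ?_⟩
      · rw [newGuess, if_neg hfresh]
        exact Finset.mem_map_of_mem (Fin.castAddEmb k) hi
      · rw [oldGuess_castAdd_self]
        exact mem_map_castLEEmb_of_ofNat_mem (hle b) (hold b hbS) hi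

end Strategies

end HatGame

open HatGame in
theorem czech_attach_hatness_three_general {V : Type*} (D : V → V → Prop) (g h : V → ℕ)
    [∀ v, NeZero (h v)] (Y S : Set V) [DecidablePred (· ∈ S)] (hSY : S ⊆ Y) (b : V) (hb : b ∈ Y)
    (hbS : b ∉ S) (m k : ℕ) (hedge : EdgeWinnable (g b) (h b) k m) (hw : Winnable D g h) :
    Winnable (attach D Y) (fun a => a.elim k g)
      (fun a => a.elim (m + k) (S.piecewise (h + g) h)) := by
  classical
  obtain ⟨F, hF, hcard, hwin⟩ := hw
  obtain ⟨A, B, hA, hB, hAB⟩ := hedge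
  have hle : ∀ v, h v ≤ S.piecewise (h + g) h v := fun v => by
    by_cases hv : v ∈ S <;> simp [hv]
  refine ⟨fun
    | none => fun c => newGuess k S b B fun v => c (some v)
    | some v => fun c => oldGuess S b hle F A v (c none) fun u => c (some u), ?_, ?_, ?_⟩
  · rintro (_ | v) c c' hc
    · exact newGuess_congr hSY hb fun v hv => hc (some v) hv
    · exact oldGuess_congr hF hSY hb (hc none) fun u hu => hc (some u) hu
  · rintro (_ | v) c
    · exact card_newGuess hB _
    · exact card_oldGuess (fun v hv => by simp [hv]) hcard hA v _ _
  · intro c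
    exact Option.exists.2 <| mem_newGuess_or_exists_mem_oldGuess
      (fun v hv => by simp [hv]) hbS hwin hAB (c none) _

/-- Attaching a vertex of hatness 3 universal to a set `Y` containing a
hatness-2 vertex `b`, increasing `h v` by `g v` for every `v ∈ Y` other
than `b`, preserves winnability. -/
theorem czech_attach_hatness_three {V : Type*} [Fintype V] [DecidableEq V]
    (D : V → V → Prop) (hloop : ∀ v, ¬ D v v)
    (g h : V → ℕ) (hgh : ∀ v, 0 < g v ∧ g v < h v)
    (Y : Set V) [DecidablePred (· ∈ Y)]
    (b : V) (hb : b ∈ Y) (hhb : h b = 2) (hgb : g b = 1)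
    (hw : HatGame.Winnable D g h) :
    HatGame.Winnable
      (fun a c : Option V =>
        match a, c with
        | none, some v => v ∈ Y
        | some v, none => v ∈ Y
        | some u, some v => D u v
        | none, none => False)
      (fun a => a.elim 1 g)
      (fun a => a.elim 3 (fun v => if v ∈ Y ∧ v ≠ b then h v + g v else h v)) := by
  have : ∀ v, NeZero (h v) := fun v => ⟨((hgh v).1.trans (hgh v).2).ne'⟩
  have hedge : HatGame.EdgeWinnable (g b) (h b) 1 2 := by
    rw [hgb, hhb]
    exact HatGame.edgeWinnable_one_succ 1
  convert czech_attach_hatness_three_general D g h Y {v | v ∈ Y ∧ v ≠ b} (fun _ hv => hv.1) b hb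
    (fun hbb => hbb.2 rfl) 2 1 hedge hw using 1
  · ext (_ | _) (_ | _) <;> rfl
  · rfl
end
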